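/- arXiv:2601.20018 — 2 statements merged into one kernel-verified Lean document; each statement's English description precedes it below -/
import Mathlib

section
/- There exists a universal constant K > 0 such that the following holds. Let N ≥ 20, let C = [c_{ij}] ∈ R^{N×N} be doubly centered, and let A = [a_{ij}] ∈ R^{N×N} have all entries in [−1,1]. Let Q_QF := Σ_{i,j∈[N]} c_{ij} a_{π(i)π(j)}. Then for every t > 0, P( Q_QF − E[Q_QF] ≥ t ) ≤ exp( − K t² / ( ‖C‖_F² + ( ‖C‖_op + max_{σ∈S_N} ‖C ∘ A^σ‖_op ) t ) ). -/
open scoped BigOperators Classical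

/-- Spectral (operator) norm of a real matrix, viewed as a linear map
between Euclidean spaces. -/
noncomputable def opNorm {m n : ℕ} (M : Matrix (Fin m) (Fin n) ℝ) : ℝ :=
  ‖LinearMap.toContinuousLinearMap (Matrix.toEuclideanLin M)‖

/-- Frobenius norm of a real matrix. -/
noncomputable def frobNorm {m n : ℕ} (M : Matrix (Fin m) (Fin n) ℝ) : ℝ :=
  Real.sqrt (∑ i, ∑ j, (M i j) ^ 2)

/-- Expectation of `f` under the uniform distribution on `S_N`. -/
noncomputable def permExp (N : ℕ) (f : Equiv.Perm (Fin N) → ℝ) : ℝ :=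
  (∑ σ : Equiv.Perm (Fin N), f σ) / (Nat.factorial N : ℝ)

/-- Probability of an event under the uniform distribution on `S_N`. -/
noncomputable def permProb (N : ℕ) (p : Equiv.Perm (Fin N) → Prop) : ℝ :=
  ((Finset.univ.filter p).card : ℝ) / (Nat.factorial N : ℝ)

/-!
Averaging over random pair flips decouples the permuted quadratic form. Conjugating `A` by
independent transpositions of disjoint pairs of points multiplies the second differences of `A`
across two pairs by Rademacher signs, so the sum over pairs of (second difference of `C`) ×
(second difference of `A`) becomes a bilinear Rademacher chaos. Its matrix is a signed sum of
submatrices of the matrices `C ⊙ A^σ`, which is where the operator norms come from, and its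
exponential moment is bounded by induction on the number of signs. Since `C` is doubly centered,
averaging over the choice of the pairs recovers `Q_QF`, up to a scale, a bounded remainder
(`Q_QF` for `Aᵀ`, divided by a quadratic in `N`), a linear permutation statistic in the diagonal
of `C`, which symmetrizes in the same way, and a constant. Convexity of `exp` combines the
exponential moments, and Chernoff's bound concludes.
-/

section Development

open Finset Real
open scoped Matrix.Norms.L2Operator

section Expectation

variable {Ω ι : Type*} [Fintype Ω] [Fintype ι]

lemma exp_expect_le [Nonempty ι] (f : ι → ℝ) : exp (𝔼 i, f i) ≤ 𝔼 i, exp (f i) := by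
  have jensen := convexOn_exp.map_sum_le (t := univ) (w := fun _ : ι => (Fintype.card ι : ℝ)⁻¹)
    (p := f) (fun _ _ => by positivity) (by simp) (fun _ _ => Set.mem_univ _)
  simpa only [smul_eq_mul, ← mul_sum, Fintype.expect_eq_sum_div_card, div_eq_inv_mul] using jensen

lemma expect_exp_expect_le [Nonempty ι] {g : ι → Ω → ℝ} {S : ℝ}
    (hg : ∀ i, 𝔼 ω, exp (g i ω) ≤ S) : 𝔼 ω, exp (𝔼 i, g i ω) ≤ S :=
  calc 𝔼 ω, exp (𝔼 i, g i ω) ≤ 𝔼 ω, 𝔼 i, exp (g i ω) :=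
        expect_le_expect fun ω _ => exp_expect_le fun i => g i ω
    _ = 𝔼 i, 𝔼 ω, exp (g i ω) := expect_comm _ _ _
    _ ≤ S := expect_le univ_nonempty fun i _ => hg i

lemma expect_exp_sum_le [Nonempty ι] {f : ι → Ω → ℝ} {S : ℝ}
    (hf : ∀ i, 𝔼 ω, exp (Fintype.card ι * f i ω) ≤ S) : 𝔼 ω, exp (∑ i, f i ω) ≤ S := by
  simpa only [← mul_expect, Fintype.card_mul_expect] using expect_exp_expect_le hf

lemma expect_exp_add_add_le {f g h : Ω → ℝ} {S : ℝ} (hf : 𝔼 ω, exp (3 * f ω) ≤ S)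
    (hg : 𝔼 ω, exp (3 * g ω) ≤ S) (hh : 𝔼 ω, exp (3 * h ω) ≤ S) :
    𝔼 ω, exp (f ω + g ω + h ω) ≤ S := by
  have := expect_exp_sum_le (f := ![f, g, h]) (S := S) (by
    simp [Fin.forall_fin_succ, hf, hg, hh])
  simpa [Fin.sum_univ_three] using this

lemma expect_exp_sub_expect_le [Nonempty Ω] {X : Ω → ℝ} {l k S : ℝ}
    (hpos : 𝔼 ω, exp (l * (X ω - k)) ≤ exp S) (hneg : 𝔼 ω, exp (-l * (X ω - k)) ≤ exp S) :
    𝔼 ω, exp (l * (X ω - 𝔼 ω, X ω)) ≤ exp (2 * S) := by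
  have shift : exp (l * (k - 𝔼 ω, X ω)) ≤ exp S := by
    refine le_trans (le_of_eq ?_) ((exp_expect_le _).trans hneg)
    rw [← mul_expect, expect_sub_distrib, Fintype.expect_const]
    ring_nf
  calc 𝔼 ω, exp (l * (X ω - 𝔼 ω, X ω))
      = (𝔼 ω, exp (l * (X ω - k))) * exp (l * (k - 𝔼 ω, X ω)) := by
        simp only [expect_mul, ← exp_add, ← mul_add, sub_add_sub_cancel]
    _ ≤ exp S * exp S := by gcongr
    _ = exp (2 * S) := by rw [← exp_add, two_mul]

lemma expect_exp_le_of_sq_le [Nonempty Ω] {Y : Ω → ℝ} {V : ℝ} (hY : ∀ ω, Y ω ^ 2 ≤ V) (l : ℝ) :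
    𝔼 ω, exp (l * (Y ω - 𝔼 ω, Y ω)) ≤ exp (2 * l ^ 2 * V) := by
  have pointwise (ω ω' : Ω) :
      exp (l * (Y ω - Y ω')) + exp (l * (Y ω' - Y ω)) ≤ 2 * exp (2 * l ^ 2 * V) :=
    calc exp (l * (Y ω - Y ω')) + exp (l * (Y ω' - Y ω))
        = 2 * cosh (l * (Y ω - Y ω')) := by rw [cosh_eq, ← mul_neg, neg_sub]; ring
      _ ≤ 2 * exp ((l * (Y ω - Y ω')) ^ 2 / 2) := by gcongr; exact cosh_le_exp_half_sq _
      _ ≤ 2 * exp (2 * l ^ 2 * V) := by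
        gcongr
        nlinarith [mul_le_mul_of_nonneg_left (hY ω) (sq_nonneg l),
          mul_le_mul_of_nonneg_left (hY ω') (sq_nonneg l), sq_nonneg (l * (Y ω + Y ω'))]
  calc 𝔼 ω, exp (l * (Y ω - 𝔼 ω', Y ω'))
      = 𝔼 ω, exp (𝔼 ω', l * (Y ω - Y ω')) := by
        simp only [← mul_expect, expect_sub_distrib, Fintype.expect_const]
    _ ≤ 𝔼 ω, 𝔼 ω', exp (l * (Y ω - Y ω')) := expect_le_expect fun ω _ => exp_expect_le _
    _ = (𝔼 ω, 𝔼 ω', (exp (l * (Y ω - Y ω')) + exp (l * (Y ω' - Y ω)))) / 2 := by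
        simp only [expect_add_distrib]
        rw [expect_comm univ univ fun ω ω' => exp (l * (Y ω' - Y ω))]
        ring
    _ ≤ exp (2 * l ^ 2 * V) := by
        rw [div_le_iff₀' two_pos]
        exact expect_le univ_nonempty fun ω _ => expect_le univ_nonempty fun ω' _ => pointwise ω ω'

lemma dens_le_exp_mul_expect_exp (X : Ω → ℝ) (t : ℝ) {l : ℝ} (hl : 0 ≤ l) :
    (({ω | t ≤ X ω} : Finset Ω).dens : ℝ) ≤ exp (-(l * t)) * 𝔼 ω, exp (l * X ω) := by
  rw [mul_expect, nnratCast_dens, Fintype.expect_eq_sum_div_card, ← sum_boole]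
  gcongr with ω
  split_ifs with h
  · rw [← exp_add, one_le_exp_iff]
    nlinarith
  · positivity

lemma dens_le_exp_of_expect_exp_le {X : Ω → ℝ} {a V M t : ℝ} (ha : 0 < a) (hV : 0 ≤ V)
    (hM : 0 ≤ M) (ht : 0 ≤ t)
    (hX : ∀ l, 0 ≤ l → 2 * a * l * M ≤ 1 → 𝔼 ω, exp (l * X ω) ≤ exp (a * l ^ 2 * V)) :
    (({ω | t ≤ X ω} : Finset Ω).dens : ℝ) ≤ exp (-(1 / (4 * a) * t ^ 2 / (V + M * t))) := by
  set W := V + M * t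
  have hW : 0 ≤ W := by positivity
  have hMW : t / W * M ≤ 1 := by
    rw [div_mul_eq_mul_div]
    exact div_le_one_of_le₀ (by linarith [mul_comm t M]) hW
  have hVW : V / W ≤ 1 := div_le_one_of_le₀ (le_add_of_nonneg_right (by positivity)) hW
  set l := t / W / (2 * a) with hl
  have hlM : 2 * a * l * M ≤ 1 := by rwa [hl, mul_div_cancel₀ _ (by positivity)]
  refine (dens_le_exp_mul_expect_exp X t (l := l) (by positivity)).trans ?_
  refine (mul_le_mul_of_nonneg_left (hX l (by positivity) hlM) (exp_pos _).le).trans ?_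
  rw [← exp_add, exp_le_exp]
  have hsq : a * l ^ 2 * V = t ^ 2 / W / (4 * a) * (V / W) := by rw [hl]; field_simp; ring
  have hlt : l * t = 2 * (t ^ 2 / W / (4 * a)) := by rw [hl]; field_simp; ring
  have hK : 1 / (4 * a) * t ^ 2 / W = t ^ 2 / W / (4 * a) := by ring
  rw [hsq, hlt, hK]
  linarith [mul_le_of_le_one_right (by positivity : 0 ≤ t ^ 2 / W / (4 * a)) hVW]

lemma expect_mul_right_eq {G : Type*} [Group G] [Fintype G] (F : G → ℝ) (τ : G) :
    𝔼 ω, F (ω * τ) = 𝔼 ω, F ω :=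
  Fintype.expect_equiv (Equiv.mulRight τ) _ _ fun _ => rfl

lemma expect_le_of_forall_expect_mul_le {G : Type*} [Group G] [Fintype G] [Nonempty ι]
    {F : G → ℝ} {S : ℝ} (τ : ι → G) (hF : ∀ ω, 𝔼 i, F (ω * τ i) ≤ S) : 𝔼 ω, F ω ≤ S :=
  calc 𝔼 ω, F ω = 𝔼 i, 𝔼 ω, F (ω * τ i) := by
        simp only [expect_mul_right_eq, Fintype.expect_const]
    _ = 𝔼 ω, 𝔼 i, F (ω * τ i) := expect_comm _ _ _
    _ ≤ S := expect_le univ_nonempty fun ω _ => hF ω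

end Expectation

section Rademacher

open Matrix

variable {ι κ : Type*} [Fintype ι] [Fintype κ]

/-- The sign `±1` encoded by a Boolean; for uniform `ε : ι → Bool` the vector `boolSign ∘ ε` is a
Rademacher vector. -/
def boolSign (b : Bool) : ℝ := bif b then 1 else -1

lemma boolSign_mul_self (b : Bool) : boolSign b * boolSign b = 1 := by cases b <;> simp [boolSign]

lemma expect_exp_boolSign_mul (x : ℝ) : 𝔼 b, exp (boolSign b * x) = cosh x := by
  rw [Fintype.expect_eq_sum_div_card]
  simp [boolSign, cosh_eq]

lemma option_dotProduct_mulVec (R : Matrix (Option ι) (Option ι) ℝ) (a : ℝ) (y : ι → ℝ) :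
    (Option.elim · a y) ⬝ᵥ R *ᵥ (Option.elim · a y) =
      R none none * a ^ 2 + a * (y ⬝ᵥ fun i => R none (some i) + R (some i) none) +
        y ⬝ᵥ R.submatrix some some *ᵥ y := by
  simp only [dotProduct, mulVec, Fintype.sum_option, Option.elim, submatrix_apply, mul_add,
    sum_add_distrib, mul_sum]
  ring_nf
  ac_rfl

lemma dotProduct_add_vecMulVec_mulVec (R : Matrix ι ι ℝ) (w y : ι → ℝ) :
    y ⬝ᵥ (R + (2⁻¹ : ℝ) • vecMulVec w w) *ᵥ y = y ⬝ᵥ R *ᵥ y + (y ⬝ᵥ w) ^ 2 / 2 := by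
  simp [add_mulVec, smul_mulVec, vecMulVec_mulVec, dotProduct_comm w y]
  ring

lemma mulVec_dotProduct_mulVec_le [DecidableEq κ] (H : Matrix ι κ ℝ) (x : κ → ℝ) :
    (H *ᵥ x) ⬝ᵥ (H *ᵥ x) ≤ ‖H‖ ^ 2 * (x ⬝ᵥ x) := by
  have := pow_le_pow_left₀ (norm_nonneg _) (l2_opNorm_mulVec H (WithLp.toLp 2 x)) 2
  rw [mul_pow, EuclideanSpace.real_norm_sq_eq, EuclideanSpace.real_norm_sq_eq] at this
  simpa [dotProduct, ← sq] using this

variable [DecidableEq ι] [DecidableEq κ]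

lemma expect_exp_rademacher_le (w : ι → ℝ) :
    𝔼 ε : ι → Bool, exp ((boolSign ∘ ε) ⬝ᵥ w) ≤ exp (w ⬝ᵥ w / 2) :=
  calc 𝔼 ε : ι → Bool, exp ((boolSign ∘ ε) ⬝ᵥ w)
      = ∏ i, 𝔼 b, exp (boolSign b * w i) := by
        simp only [Fintype.expect_eq_sum_div_card, dotProduct, Function.comp_apply, exp_sum,
          prod_div_distrib, prod_univ_sum, Fintype.piFinset_univ, Fintype.card_pi, Nat.cast_prod]
    _ ≤ ∏ i, exp (w i ^ 2 / 2) := by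
        simp only [expect_exp_boolSign_mul]
        exact prod_le_prod (fun i _ => (cosh_pos _).le) fun i _ => cosh_le_exp_half_sq _
    _ = exp (w ⬝ᵥ w / 2) := by simp only [← exp_sum, dotProduct, sum_div, sq]

lemma expect_option_pi {β : Type*} [Fintype β] (F : (Option ι → β) → ℝ) :
    𝔼 ε, F ε = 𝔼 ε : ι → β, 𝔼 b, F (Option.elim · b ε) := by
  rw [expect_comm, ← expect_product', univ_product_univ]
  refine Fintype.expect_equiv Equiv.piOptionEquivProd _ _ fun ε => congrArg F (funext fun o => ?_)
  cases o <;> rfl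

/-- Averaging out the sign at `none` replaces `exp (± x ⬝ᵥ w)` by `exp ((x ⬝ᵥ w) ^ 2 / 2)`, which is
again a quadratic form in the remaining signs, with matrix `w wᵀ / 2`. -/
lemma expect_exp_rademacher_quadForm_option_le (R : Matrix (Option ι) (Option ι) ℝ) :
    𝔼 ε : Option ι → Bool, exp ((boolSign ∘ ε) ⬝ᵥ R *ᵥ (boolSign ∘ ε)) ≤
      exp (R none none) * 𝔼 ε : ι → Bool, exp ((boolSign ∘ ε) ⬝ᵥ
        (R.submatrix some some + (2⁻¹ : ℝ) • vecMulVec (fun i => R none (some i) + R (some i) none)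
          (fun i => R none (some i) + R (some i) none)) *ᵥ (boolSign ∘ ε)) := by
  rw [expect_option_pi, mul_expect]
  refine expect_le_expect fun ε _ => ?_
  have comp_elim (b : Bool) :
      boolSign ∘ (Option.elim · b ε) = (Option.elim · (boolSign b) (boolSign ∘ ε)) := by
    ext o; cases o <;> rfl
  simp only [comp_elim, option_dotProduct_mulVec, dotProduct_add_vecMulVec_mulVec]
  set w : ι → ℝ := fun i => R none (some i) + R (some i) none
  set x := boolSign ∘ ε
  calc 𝔼 b, exp (R none none * boolSign b ^ 2 + boolSign b * (x ⬝ᵥ w) +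
          x ⬝ᵥ R.submatrix some some *ᵥ x)
      = exp (R none none) * exp (x ⬝ᵥ R.submatrix some some *ᵥ x) * cosh (x ⬝ᵥ w) := by
        rw [← expect_exp_boolSign_mul, mul_expect]
        refine expect_congr rfl fun b _ => ?_
        rw [sq, boolSign_mul_self, ← exp_add, ← exp_add]
        ring_nf
    _ ≤ exp (R none none) * exp (x ⬝ᵥ R.submatrix some some *ᵥ x) * exp ((x ⬝ᵥ w) ^ 2 / 2) := by
        gcongr; exact cosh_le_exp_half_sq _
    _ = _ := by rw [mul_assoc, ← exp_add]

variable (ι) in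
/-- The statement that a quadratic form in a Rademacher vector indexed by `ι`, whose matrix is
positive and at most `1/4`, has exponential moment at most the exponential of twice its trace.
This is the induction hypothesis for the number of signs. -/
def QuadFormMGFBound : Prop :=
  ∀ R : Matrix ι ι ℝ, (∀ x, 0 ≤ x ⬝ᵥ R *ᵥ x) → (∀ x, 4 * (x ⬝ᵥ R *ᵥ x) ≤ x ⬝ᵥ x) →
    𝔼 ε : ι → Bool, exp ((boolSign ∘ ε) ⬝ᵥ R *ᵥ (boolSign ∘ ε)) ≤ exp (2 * R.trace)

lemma QuadFormMGFBound.of_equiv (e : ι ≃ κ) (h : QuadFormMGFBound ι) : QuadFormMGFBound κ := by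
  intro R hR hR'
  have form_eq (x : κ → ℝ) : x ⬝ᵥ R *ᵥ x = (x ∘ e) ⬝ᵥ R.submatrix e e *ᵥ (x ∘ e) := by
    rw [submatrix_mulVec_equiv, Function.comp_assoc, e.self_comp_symm, Function.comp_id,
      comp_equiv_dotProduct_comp_equiv]
  have surj (x : ι → ℝ) : ∃ y : κ → ℝ, x = y ∘ e := ⟨x ∘ e.symm, by ext; simp⟩
  have key := h (R.submatrix e e)
    (fun x => by obtain ⟨y, rfl⟩ := surj x; rw [← form_eq]; exact hR y)
    (fun x => by
      obtain ⟨y, rfl⟩ := surj x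
      rw [← form_eq, comp_equiv_dotProduct_comp_equiv]; exact hR' y)
  rw [show (R.submatrix e e).trace = R.trace from e.sum_comp fun i => R i i] at key
  refine (Fintype.expect_equiv (e.arrowCongr (Equiv.refl Bool)).symm _ _ fun ε => ?_).trans_le key
  rw [form_eq]
  rfl

lemma QuadFormMGFBound.option (h : QuadFormMGFBound ι) : QuadFormMGFBound (Option ι) := by
  intro R hR hR'
  set w : ι → ℝ := fun i => R none (some i) + R (some i) none
  set r := R none none
  have hnonneg (a : ℝ) (y : ι → ℝ) : 0 ≤ r * a ^ 2 + a * (y ⬝ᵥ w) +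
      y ⬝ᵥ R.submatrix some some *ᵥ y :=
    (hR (Option.elim · a y)).trans_eq (option_dotProduct_mulVec R a y)
  have hle (a : ℝ) (y : ι → ℝ) : 4 * (r * a ^ 2 + a * (y ⬝ᵥ w) +
      y ⬝ᵥ R.submatrix some some *ᵥ y) ≤ a ^ 2 + y ⬝ᵥ y := by
    rw [← option_dotProduct_mulVec]
    simpa [dotProduct, Fintype.sum_option, ← sq] using hR' (Option.elim · a y)
  have hr : 0 ≤ r := by simpa using hnonneg 1 0
  -- The bounds `0 ≤ R` at `(-1/2, w)` and `4 R ≤ 1` at `(0, w)` let the trace of the rank-one term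
  -- `w wᵀ / 2` be paid for by `r`.
  have hww : w ⬝ᵥ w ≤ r := by linarith [hnonneg (-1 / 2) w, hle 0 w]
  have key := h (R.submatrix some some + (2⁻¹ : ℝ) • vecMulVec w w)
    (fun y => by
      rw [dotProduct_add_vecMulVec_mulVec]
      linarith [hnonneg 0 y, sq_nonneg (y ⬝ᵥ w)])
    (fun y => by
      rw [dotProduct_add_vecMulVec_mulVec]
      linarith [hle (y ⬝ᵥ w) y, mul_nonneg hr (sq_nonneg (y ⬝ᵥ w)), sq_nonneg (y ⬝ᵥ w)])
  refine (expect_exp_rademacher_quadForm_option_le R).trans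
    ((mul_le_mul_of_nonneg_left key (exp_pos _).le).trans ?_)
  have htrace : R.trace = r + (R.submatrix some some).trace := Fintype.sum_option _
  rw [← exp_add, exp_le_exp, trace_add, trace_smul, trace_vecMulVec, htrace, smul_eq_mul]
  linarith

variable (ι) in
theorem quadFormMGFBound : QuadFormMGFBound ι := by
  refine Fintype.induction_empty_option (P := fun ι _ => ∀ [DecidableEq ι], QuadFormMGFBound ι)
    (fun α β _ e ih _ => ?_) ?_ (fun α _ ih _ => ?_) ι
  · let _ := Fintype.ofEquiv β e.symm
    let _ := Classical.decEq α
    exact ih.of_equiv e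
  · intro _ R _ _
    simp
  · let _ := Classical.decEq α
    convert! QuadFormMGFBound.option ih

theorem expect_exp_rademacher_bilin_le (H : Matrix ι κ ℝ) (hH : 2 * ‖H‖ ^ 2 ≤ 1) :
    𝔼 ε : ι → Bool, 𝔼 ε' : κ → Bool, exp ((boolSign ∘ ε) ⬝ᵥ H *ᵥ (boolSign ∘ ε')) ≤
      exp (∑ i, ∑ j, H i j ^ 2) := by
  set R : Matrix κ κ ℝ := (2⁻¹ : ℝ) • (Hᵀ * H) with hR
  have form_eq (x : κ → ℝ) : x ⬝ᵥ R *ᵥ x = (H *ᵥ x) ⬝ᵥ (H *ᵥ x) / 2 := by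
    rw [hR, smul_mulVec, dotProduct_smul, ← mulVec_mulVec, dotProduct_mulVec, vecMul_transpose,
      smul_eq_mul, inv_mul_eq_div]
  have trace_eq : 2 * R.trace = ∑ i, ∑ j, H i j ^ 2 := by
    rw [hR, trace_smul, smul_eq_mul, mul_inv_cancel_left₀ two_ne_zero, sum_comm]
    simp only [trace, diag_apply, mul_apply, transpose_apply, sq]
  calc 𝔼 ε : ι → Bool, 𝔼 ε' : κ → Bool, exp ((boolSign ∘ ε) ⬝ᵥ H *ᵥ (boolSign ∘ ε'))
      = 𝔼 ε' : κ → Bool, 𝔼 ε : ι → Bool, exp ((boolSign ∘ ε) ⬝ᵥ H *ᵥ (boolSign ∘ ε')) :=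
        expect_comm _ _ _
    _ ≤ 𝔼 ε' : κ → Bool, exp ((boolSign ∘ ε') ⬝ᵥ R *ᵥ (boolSign ∘ ε')) := by
        simp only [form_eq]
        exact expect_le_expect fun ε' _ => expect_exp_rademacher_le _
    _ ≤ exp (2 * R.trace) := by
        refine quadFormMGFBound κ R (fun x => ?_) fun x => ?_
        · rw [form_eq]
          exact div_nonneg (dotProduct_self_star_nonneg _) two_pos.le
        · rw [form_eq]
          have hx : 0 ≤ x ⬝ᵥ x := dotProduct_self_star_nonneg x
          nlinarith [mulVec_dotProduct_mulVec_le H x]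
    _ = exp (∑ i, ∑ j, H i j ^ 2) := by rw [trace_eq]

end Rademacher

section OperatorNorm

open Matrix

variable {α β ι κ : Type*} [Fintype α] [Fintype β] [Fintype ι] [Fintype κ]
  [DecidableEq β] [DecidableEq κ]

lemma l2_opNorm_one_submatrix_id_le [DecidableEq α] [DecidableEq ι] {f : ι → α} (hf : f.Injective) :
    ‖(1 : Matrix α α ℝ).submatrix id f‖ ≤ 1 := by
  have gram : ((1 : Matrix α α ℝ).submatrix id f)ᴴ * (1 : Matrix α α ℝ).submatrix id f = 1 := by
    rw [conjTranspose_submatrix, conjTranspose_one, ← submatrix_mul _ _ _ _ _ Function.bijective_id,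
      one_mul, submatrix_one _ hf]
  have norm_one : ‖(1 : Matrix ι ι ℝ)‖ ≤ 1 := by
    rw [← diagonal_one, l2_opNorm_diagonal]
    exact (pi_norm_const_le (1 : ℝ)).trans norm_one.le
  refine abs_le_one_iff_mul_self_le_one.2 ?_ |> (abs_norm _).symm.trans_le
  rwa [← l2_opNorm_conjTranspose_mul_self, gram]

lemma l2_opNorm_submatrix_le (B : Matrix α β ℝ) {f : ι → α} {g : κ → β} (hf : f.Injective)
    (hg : g.Injective) : ‖B.submatrix f g‖ ≤ ‖B‖ := by
  have factor : B.submatrix f g =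
      ((1 : Matrix α α ℝ).submatrix id f)ᴴ * B * (1 : Matrix β β ℝ).submatrix id g := by
    ext i j
    simp [mul_apply, one_apply]
  calc ‖B.submatrix f g‖
      ≤ ‖(1 : Matrix α α ℝ).submatrix id f‖ * ‖B‖ * ‖(1 : Matrix β β ℝ).submatrix id g‖ := by
        rw [factor, ← l2_opNorm_conjTranspose ((1 : Matrix α α ℝ).submatrix id f)]
        exact (l2_opNorm_mul _ _).trans
          (mul_le_mul_of_nonneg_right (l2_opNorm_mul _ _) (norm_nonneg _))
    _ ≤ 1 * ‖B‖ * 1 := by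
        gcongr
        exacts [l2_opNorm_one_submatrix_id_le hf, l2_opNorm_one_submatrix_id_le hg]
    _ = ‖B‖ := by rw [one_mul, mul_one]

end OperatorNorm

section PairFlips

variable {α ι : Type*}

/-- The difference `b (x true) - b (x false)` of a function across a pair of points. -/
def pairDiff (b : α → ℝ) (x : Bool → α) : ℝ := ∑ s, boolSign s * b (x s)

/-- The second difference `C x₁ y₁ - C x₁ y₀ - C x₀ y₁ + C x₀ y₀` of a matrix across two pairs of
points. -/
def doubleDiff (C : Matrix α α ℝ) (x y : Bool → α) : ℝ :=
  ∑ s, ∑ t, boolSign s * boolSign t * C (x s) (y t)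

lemma doubleDiff_sq_le (C : Matrix α α ℝ) (x y : Bool → α) :
    doubleDiff C x y ^ 2 ≤ 4 * ∑ s, ∑ t, C (x s) (y t) ^ 2 := by
  have := sq_sum_le_card_mul_sum_sq (s := (univ : Finset (Bool × Bool)))
    (f := fun u => boolSign u.1 * boolSign u.2 * C (x u.1) (y u.2))
  have sign_sq (b : Bool) : boolSign b ^ 2 = 1 := by rw [sq, boolSign_mul_self]
  simpa [Fintype.sum_prod_type, mul_pow, sign_sq, doubleDiff] using this

/-- The permutation exchanging the two points `pt (i, ·)` for every `i` with `ε i = false`. -/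
noncomputable def flipPairs (pt : ι × Bool ↪ α) (ε : ι → Bool) : Equiv.Perm α :=
  Equiv.Perm.viaEmbedding
    (Equiv.prodCongrRight fun i => bif ε i then Equiv.refl Bool else Equiv.boolNot) pt

lemma flipPairs_apply (pt : ι × Bool ↪ α) (ε : ι → Bool) (i : ι) (s : Bool) :
    flipPairs pt ε (pt (i, s)) = pt (i, (bif ε i then Equiv.refl Bool else Equiv.boolNot) s) :=
  Equiv.Perm.viaEmbedding_apply _ _ _

lemma norm_boolSign (b : Bool) : ‖boolSign b‖ = 1 := by cases b <;> simp [boolSign]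

lemma boolSign_flip (b s : Bool) :
    boolSign ((bif b then Equiv.refl Bool else Equiv.boolNot) s) = boolSign b * boolSign s := by
  cases b <;> cases s <;> simp [boolSign]

lemma pairDiff_flipPairs (b : α → ℝ) (pt : ι × Bool ↪ α) (ω : Equiv.Perm α) (ε : ι → Bool)
    (i : ι) :
    pairDiff b (fun s => (ω * flipPairs pt ε) (pt (i, s))) =
      boolSign (ε i) * pairDiff b (fun s => ω (pt (i, s))) := by
  simp only [pairDiff, Equiv.Perm.mul_apply, flipPairs_apply, mul_sum]
  refine Fintype.sum_equiv (bif ε i then Equiv.refl Bool else Equiv.boolNot) _ _ fun s => ?_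
  rw [boolSign_flip, ← mul_assoc, ← mul_assoc, boolSign_mul_self, one_mul]

lemma doubleDiff_flipPairs (A : Matrix α α ℝ) (pt : ι × Bool ↪ α) (ω : Equiv.Perm α)
    (ε : ι → Bool) (i j : ι) :
    doubleDiff A (fun s => (ω * flipPairs pt ε) (pt (i, s)))
        (fun s => (ω * flipPairs pt ε) (pt (j, s))) =
      boolSign (ε i) * boolSign (ε j) *
        doubleDiff A (fun s => ω (pt (i, s))) (fun s => ω (pt (j, s))) := by
  have as_pairDiff (x y : Bool → α) :
      doubleDiff A x y = pairDiff (fun a => pairDiff (A a) y) x := by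
    simp only [doubleDiff, pairDiff, mul_sum, mul_assoc]
  simp only [as_pairDiff, pairDiff_flipPairs]
  simp only [pairDiff, mul_sum]
  exact sum_congr rfl fun _ _ => sum_congr rfl fun _ _ => by ring

end PairFlips

lemma sum_comp_le_of_injective {α β : Type*} [Fintype α] [Fintype β] {f : β → α}
    (hf : f.Injective) {G : α → ℝ} (hG : ∀ a, 0 ≤ G a) : ∑ i, G (f i) ≤ ∑ a, G a := by
  simpa using sum_le_univ_sum_of_nonneg (s := univ.map ⟨f, hf⟩) hG

lemma sum_sum_comp_le_of_injective {α β γ : Type*} [Fintype α] [Fintype β] [Fintype γ] {f : β → α}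
    {g : γ → α} (hf : f.Injective) (hg : g.Injective) {F : α → α → ℝ} (hF : ∀ a b, 0 ≤ F a b) :
    ∑ i, ∑ j, F (f i) (g j) ≤ ∑ a, ∑ b, F a b :=
  (sum_le_sum fun i _ => sum_comp_le_of_injective hg (hF (f i))).trans
    (sum_comp_le_of_injective hf fun a => sum_nonneg fun b _ => hF a b)

section Chaos

open Matrix

variable {α ι κ : Type*}

/-- The decoupled chaos matrix: its `(i, j)` entry pairs the second difference of `C` across the
pairs `i` and `j` of base points, placed by `ρ`, with that of `A`, placed by `ω`. -/
def chaosMatrix (pt : (ι ⊕ κ) × Bool ↪ α) (C A : Matrix α α ℝ) (ρ ω : Equiv.Perm α) :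
    Matrix ι κ ℝ :=
  of fun i j =>
    doubleDiff C (fun s => ρ (pt (.inl i, s))) (fun s => ρ (pt (.inr j, s))) *
      doubleDiff A (fun s => ω (pt (.inl i, s))) (fun s => ω (pt (.inr j, s)))

variable (pt : (ι ⊕ κ) × Bool ↪ α) (C A : Matrix α α ℝ) (ρ ω : Equiv.Perm α)

lemma chaosMatrix_flipPairs (ε : ι → Bool) (ε' : κ → Bool) (i : ι) (j : κ) :
    chaosMatrix pt C A ρ (ω * flipPairs pt (Sum.elim ε ε')) i j =
      boolSign (ε i) * boolSign (ε' j) * chaosMatrix pt C A ρ ω i j := by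
  simp only [chaosMatrix, of_apply, doubleDiff_flipPairs, Sum.elim_inl, Sum.elim_inr]
  ring

lemma sum_chaosMatrix_flipPairs [Fintype ι] [Fintype κ] (ε : ι → Bool) (ε' : κ → Bool) :
    ∑ i, ∑ j, chaosMatrix pt C A ρ (ω * flipPairs pt (Sum.elim ε ε')) i j =
      (boolSign ∘ ε) ⬝ᵥ chaosMatrix pt C A ρ ω *ᵥ (boolSign ∘ ε') := by
  simp only [chaosMatrix_flipPairs, dotProduct, mulVec, mul_sum, Function.comp_apply]
  exact sum_congr rfl fun _ _ => sum_congr rfl fun _ _ => by ring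

lemma chaosMatrix_eq_sum : chaosMatrix pt C A ρ ω =
    ∑ s, ∑ t, ∑ s', ∑ t', (boolSign s * boolSign t * (boolSign s' * boolSign t')) •
      of fun i j => C (ρ (pt (.inl i, s))) (ρ (pt (.inr j, t))) *
        A (ω (pt (.inl i, s'))) (ω (pt (.inr j, t'))) := by
  ext i j
  simp only [chaosMatrix, doubleDiff, of_apply, Matrix.sum_apply, Matrix.smul_apply, smul_eq_mul,
    sum_mul]
  simp only [mul_sum]
  exact sum_congr rfl fun _ _ => sum_congr rfl fun _ _ => sum_congr rfl fun _ _ =>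
    sum_congr rfl fun _ _ => by ring

lemma exists_hadamard_submatrix_eq [Finite ι] [Finite κ] (s t s' t' : Bool) :
    ∃ σ : Equiv.Perm α,
      (of fun i j => C (ρ (pt (.inl i, s))) (ρ (pt (.inr j, t))) *
        A (ω (pt (.inl i, s'))) (ω (pt (.inr j, t'))) : Matrix ι κ ℝ) =
      (C ⊙ A.submatrix σ σ).submatrix (fun i => ρ (pt (.inl i, s)))
        (fun j => ρ (pt (.inr j, t))) := by
  have selection_injective (b b' : Bool) :
      Function.Injective fun k : ι ⊕ κ => pt (k, Sum.elim (fun _ => b) (fun _ => b') k) :=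
    fun k k' h => congrArg Prod.fst (pt.injective h)
  obtain ⟨σ, hσ⟩ := Equiv.Perm.exists_extending_pair _ _
    (ρ.injective.comp (selection_injective s t)) (ω.injective.comp (selection_injective s' t'))
  refine ⟨σ, ?_⟩
  ext i j
  have hi := hσ (.inl i)
  have hj := hσ (.inr j)
  simp only [Function.comp_apply, Sum.elim_inl, Sum.elim_inr] at hi hj
  simp only [of_apply, submatrix_apply, hadamard_apply, hi, hj]

variable [Fintype α] [Fintype ι] [Fintype κ]

lemma sum_sq_chaosMatrix_le (hA : ∀ a b, |A a b| ≤ 1) :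
    ∑ i, ∑ j, chaosMatrix pt C A ρ ω i j ^ 2 ≤ 64 * ∑ a, ∑ b, C a b ^ 2 := by
  have hA' (x y : Bool → α) : doubleDiff A x y ^ 2 ≤ 16 := by
    refine (doubleDiff_sq_le A x y).trans ?_
    have : ∑ s, ∑ t, A (x s) (y t) ^ 2 ≤ ∑ _s : Bool, ∑ _t : Bool, (1 : ℝ) :=
      sum_le_sum fun s _ => sum_le_sum fun t _ => (sq_le_one_iff_abs_le_one _).2 (hA _ _)
    simp only [sum_const, card_univ, Fintype.card_bool, nsmul_eq_mul, Nat.cast_ofNat] at this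
    linarith
  have entry_le (i : ι) (j : κ) : chaosMatrix pt C A ρ ω i j ^ 2 ≤
      64 * ∑ s, ∑ t, C (ρ (pt (.inl i, s))) (ρ (pt (.inr j, t))) ^ 2 :=
    calc chaosMatrix pt C A ρ ω i j ^ 2
        = doubleDiff C (fun s => ρ (pt (.inl i, s))) (fun s => ρ (pt (.inr j, s))) ^ 2 *
            doubleDiff A (fun s => ω (pt (.inl i, s))) (fun s => ω (pt (.inr j, s))) ^ 2 :=
          mul_pow _ _ 2
      _ ≤ (4 * ∑ s, ∑ t, C (ρ (pt (.inl i, s))) (ρ (pt (.inr j, t))) ^ 2) * 16 := by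
          gcongr
          exacts [doubleDiff_sq_le C _ _, hA' _ _]
      _ = _ := by ring
  calc ∑ i, ∑ j, chaosMatrix pt C A ρ ω i j ^ 2
      ≤ ∑ i, ∑ j, 64 * ∑ s, ∑ t, C (ρ (pt (.inl i, s))) (ρ (pt (.inr j, t))) ^ 2 :=
        sum_le_sum fun i _ => sum_le_sum fun j _ => entry_le i j
    _ = 64 * ∑ u : ι × Bool, ∑ v : κ × Bool,
          C (ρ (pt (.inl u.1, u.2))) (ρ (pt (.inr v.1, v.2))) ^ 2 := by
        simp only [Fintype.sum_prod_type, mul_sum]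
        exact sum_congr rfl fun i _ => sum_comm
    _ ≤ 64 * ∑ a, ∑ b, C a b ^ 2 := by
        gcongr
        exact sum_sum_comp_le_of_injective (F := fun a b => C a b ^ 2)
          ((ρ.injective.comp pt.injective).comp (Sum.inl_injective.prodMap Function.injective_id))
          ((ρ.injective.comp pt.injective).comp (Sum.inr_injective.prodMap Function.injective_id))
          fun _ _ => sq_nonneg _

variable [DecidableEq α]

lemma l2_opNorm_chaosMatrix_le [DecidableEq κ] {M : ℝ}
    (hM : ∀ σ : Equiv.Perm α, ‖C ⊙ A.submatrix σ σ‖ ≤ M) :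
    ‖chaosMatrix pt C A ρ ω‖ ≤ 16 * M := by
  have term_le (s t s' t' : Bool) :
      ‖(boolSign s * boolSign t * (boolSign s' * boolSign t')) •
        (of fun i j => C (ρ (pt (.inl i, s))) (ρ (pt (.inr j, t))) *
          A (ω (pt (.inl i, s'))) (ω (pt (.inr j, t'))) : Matrix ι κ ℝ)‖ ≤ M := by
    obtain ⟨σ, hσ⟩ := exists_hadamard_submatrix_eq pt C A ρ ω s t s' t'
    rw [hσ, norm_smul]
    simp only [norm_mul, norm_boolSign, one_mul]
    refine (l2_opNorm_submatrix_le _ (fun i i' h => ?_) fun j j' h => ?_).trans (hM σ)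
    · simpa using h
    · simpa using h
  rw [chaosMatrix_eq_sum]
  refine (norm_sum_le_of_le _ fun s _ => norm_sum_le_of_le _ fun t _ => norm_sum_le_of_le _
    fun s' _ => norm_sum_le_of_le _ fun t' _ => term_le s t s' t').trans_eq ?_
  simp only [sum_const, card_univ, Fintype.card_bool, nsmul_eq_mul]
  ring

theorem expect_exp_sum_chaosMatrix_le {M μ : ℝ} (hA : ∀ a b, |A a b| ≤ 1)
    (hM : ∀ σ : Equiv.Perm α, ‖C ⊙ A.submatrix σ σ‖ ≤ M) (hμ : 512 * (μ * M) ^ 2 ≤ 1) :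
    𝔼 ω, exp (μ * ∑ i, ∑ j, chaosMatrix pt C A ρ ω i j) ≤
      exp (64 * μ ^ 2 * ∑ a, ∑ b, C a b ^ 2) := by
  refine expect_le_of_forall_expect_mul_le
    (fun ε : (ι → Bool) × (κ → Bool) => flipPairs pt (Sum.elim ε.1 ε.2)) fun ω => ?_
  set H := μ • chaosMatrix pt C A ρ ω with hH
  have norm_le : 2 * ‖H‖ ^ 2 ≤ 1 := by
    have := pow_le_pow_left₀ (norm_nonneg _) (l2_opNorm_chaosMatrix_le pt C A ρ ω hM) 2
    rw [hH, norm_smul, mul_pow, norm_eq_abs, sq_abs]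
    nlinarith [mul_le_mul_of_nonneg_left this (sq_nonneg μ)]
  calc 𝔼 ε : (ι → Bool) × (κ → Bool),
        exp (μ * ∑ i, ∑ j, chaosMatrix pt C A ρ (ω * flipPairs pt (Sum.elim ε.1 ε.2)) i j)
      = 𝔼 ε : ι → Bool, 𝔼 ε' : κ → Bool, exp ((boolSign ∘ ε) ⬝ᵥ H *ᵥ (boolSign ∘ ε')) := by
        rw [← expect_product', univ_product_univ]
        simp only [sum_chaosMatrix_flipPairs, hH, smul_mulVec, dotProduct_smul, smul_eq_mul]
    _ ≤ exp (∑ i, ∑ j, H i j ^ 2) := expect_exp_rademacher_bilin_le H norm_le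
    _ ≤ exp (64 * μ ^ 2 * ∑ a, ∑ b, C a b ^ 2) := by
        simp only [hH, Matrix.smul_apply, smul_eq_mul, mul_pow, ← mul_sum]
        rw [exp_le_exp, mul_comm 64, mul_assoc]
        exact mul_le_mul_of_nonneg_left (sum_sq_chaosMatrix_le pt C A ρ ω hA) (sq_nonneg μ)

theorem expect_exp_expect_sum_chaosMatrix_le {M μ : ℝ} (hA : ∀ a b, |A a b| ≤ 1)
    (hM : ∀ σ : Equiv.Perm α, ‖C ⊙ A.submatrix σ σ‖ ≤ M) (hμ : 512 * (μ * M) ^ 2 ≤ 1) :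
    𝔼 ω : Equiv.Perm α, exp (μ * 𝔼 ρ, ∑ i, ∑ j, chaosMatrix pt C A ρ (ω * ρ) i j) ≤
      exp (64 * μ ^ 2 * ∑ a, ∑ b, C a b ^ 2) := by
  simp only [mul_expect]
  refine expect_exp_expect_le fun ρ => ?_
  rw [expect_mul_right_eq fun ω => exp (μ * ∑ i, ∑ j, chaosMatrix pt C A ρ ω i j)]
  exact expect_exp_sum_chaosMatrix_le pt C A ρ hA hM hμ

end Chaos

section Sampling

open Equiv (Perm swap)

variable {α : Type*} [Fintype α] [DecidableEq α]

lemma card_sub_mul_expect_apply (S : Finset α) (z : α) (G : Perm α → α → ℝ)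
    (hG : ∀ ρ, ∀ w ∉ S, G (ρ * swap z w) = G ρ) :
    (Fintype.card α - #S : ℝ) * 𝔼 ρ, G ρ (ρ z) = 𝔼 ρ, (∑ a, G ρ a - ∑ x ∈ S, G ρ (ρ x)) := by
  have exchange (w : α) (hw : w ∈ Sᶜ) : 𝔼 ρ, G ρ (ρ w) = 𝔼 ρ, G ρ (ρ z) := by
    rw [← expect_mul_right_eq (fun ρ => G ρ (ρ z)) (swap z w)]
    simp only [hG _ w (mem_compl.1 hw), Equiv.Perm.mul_apply, Equiv.swap_apply_left]
  have sum_compl_eq (ρ : Perm α) :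
      ∑ a, G ρ a - ∑ x ∈ S, G ρ (ρ x) = ∑ w ∈ Sᶜ, G ρ (ρ w) := by
    rw [← Equiv.sum_comp ρ (G ρ), sub_eq_iff_eq_add', sum_add_sum_compl]
  simp only [sum_compl_eq, expect_sum_comm]
  rw [sum_congr rfl exchange, sum_const, card_compl, nsmul_eq_mul, Nat.cast_sub (card_le_univ S)]

lemma card_mul_expect_apply (φ : α → ℝ) (p : α) :
    Fintype.card α * 𝔼 ρ : Perm α, φ (ρ p) = ∑ i, φ i := by
  simpa using card_sub_mul_expect_apply ∅ p (fun _ => φ) fun _ _ _ => rfl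

lemma card_mul_card_sub_mul_expect_apply₂ (φ : α → α → ℝ) {p q : α} (hpq : p ≠ q) :
    Fintype.card α * (Fintype.card α - 1) * 𝔼 ρ : Perm α, φ (ρ p) (ρ q) =
      ∑ i, ∑ j, φ i j - ∑ i, φ i i := by
  have second := card_sub_mul_expect_apply {p} q (fun ρ => φ (ρ p)) fun ρ w hw => by
    rw [Equiv.Perm.mul_apply, Equiv.swap_apply_of_ne_of_ne hpq (notMem_singleton.1 hw).symm]
  simp only [card_singleton, Nat.cast_one, sum_singleton] at second
  rw [mul_assoc, second, card_mul_expect_apply (fun i => ∑ j, φ i j - φ i i), sum_sub_distrib]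

lemma expect_apply₄ (φ : α → α → α → α → ℝ) {p q r s : α} (hpq : p ≠ q) (hpr : p ≠ r)
    (hps : p ≠ s) (hqr : q ≠ r) (hqs : q ≠ s) (hrs : r ≠ s) {χ : α → α → α → ℝ}
    (hχ : ∀ i j a, χ i j a = ∑ b, φ i j a b - φ i j a i - φ i j a j - φ i j a a) :
    (Fintype.card α - 2) * ((Fintype.card α - 3) * 𝔼 ρ : Perm α, φ (ρ p) (ρ q) (ρ r) (ρ s)) =
      𝔼 ρ : Perm α, (∑ a, χ (ρ p) (ρ q) a - χ (ρ p) (ρ q) (ρ p) - χ (ρ p) (ρ q) (ρ q)) := by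
  have fourth := card_sub_mul_expect_apply {p, q, r} s (fun ρ => φ (ρ p) (ρ q) (ρ r))
    fun ρ w hw => by
      simp only [mem_insert, mem_singleton, not_or] at hw
      simp only [Equiv.Perm.mul_apply, Equiv.swap_apply_of_ne_of_ne hps (Ne.symm hw.1),
        Equiv.swap_apply_of_ne_of_ne hqs (Ne.symm hw.2.1),
        Equiv.swap_apply_of_ne_of_ne hrs (Ne.symm hw.2.2)]
  have third := card_sub_mul_expect_apply {p, q} r (fun ρ => χ (ρ p) (ρ q)) fun ρ w hw => by
    simp only [mem_insert, mem_singleton, not_or] at hw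
    simp only [Equiv.Perm.mul_apply, Equiv.swap_apply_of_ne_of_ne hpr (Ne.symm hw.1),
      Equiv.swap_apply_of_ne_of_ne hqr (Ne.symm hw.2)]
  have card_three : #{p, q, r} = 3 := card_eq_three.2 ⟨p, q, r, hpq, hpr, hqr, rfl⟩
  have sum_three (f : α → ℝ) : ∑ x ∈ {p, q, r}, f x = f p + f q + f r := by
    rw [sum_insert (by simp [hpq, hpr]), sum_pair hqr, add_assoc]
  simp only [card_three, Nat.cast_ofNat, sum_three, ← sub_sub] at fourth
  simp only [card_pair hpq, Nat.cast_ofNat, sum_pair hpq, ← sub_sub] at third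
  simp only [fourth, ← hχ, third]

end Sampling

section Decoupling

open Equiv (Perm)

variable {α κ : Type*} [Fintype α]

/-- The matrix of `(n - 2) (n - 3)` times the mean second difference `Aᵢⱼ - Aᵢᵦ - Aₐⱼ + Aₐᵦ`, where
`a ≠ b` are drawn at random outside `{i, j}` for `i ≠ j`; its diagonal extends the same formula. -/
def secondDiffMean (A : Matrix α α ℝ) : Matrix α α ℝ :=
  let n : ℝ := Fintype.card α
  .of fun i j => (n ^ 2 - 3 * n + 1) * A i j + A j i +
    ((n - 1) * A i i - (n - 2) * ∑ b, A i b - ∑ a, A a i) +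
    ((n - 1) * A j j - (n - 2) * ∑ a, A a j - ∑ b, A j b) +
    (∑ a, ∑ b, A a b - A.trace)

lemma sum_sum_mul_add_of_centered {C : Matrix α α ℝ} (hcol : ∀ j, ∑ i, C i j = 0)
    (hrow : ∀ i, ∑ j, C i j = 0) (F : α → α → ℝ) (u w : α → ℝ) (c : ℝ) :
    ∑ i, ∑ j, C i j * (F i j + u i + w j + c) = ∑ i, ∑ j, C i j * F i j := by
  have row_zero (u : α → ℝ) : ∑ i, ∑ j, C i j * u i = 0 := by
    simp only [← sum_mul, hrow, zero_mul, sum_const_zero]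
  have col_zero : ∑ i, ∑ j, C i j * w j = 0 := by
    rw [sum_comm]
    simp only [← sum_mul, hcol, zero_mul, sum_const_zero]
  simp only [mul_add, sum_add_distrib, row_zero u, col_zero, row_zero fun _ => c, add_zero]

lemma sum_sum_mul_secondDiffMean {C : Matrix α α ℝ} (hcol : ∀ j, ∑ i, C i j = 0)
    (hrow : ∀ i, ∑ j, C i j = 0) (A : Matrix α α ℝ) {n : ℝ} (hn : Fintype.card α = n) :
    ∑ i, ∑ j, C i j * secondDiffMean A i j =
      (n ^ 2 - 3 * n + 1) * ∑ i, ∑ j, C i j * A i j + ∑ i, ∑ j, C i j * A j i := by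
  simp only [secondDiffMean, Matrix.of_apply, hn]
  rw [sum_sum_mul_add_of_centered hcol hrow fun i j => (n ^ 2 - 3 * n + 1) * A i j + A j i]
  simp only [mul_add, sum_add_distrib, mul_left_comm _ (n ^ 2 - 3 * n + 1), ← mul_sum]

/-- The deviation of a diagonal entry from its row and column: `n Aᵢᵢ - ∑ⱼ Aᵢⱼ - ∑ⱼ Aⱼᵢ`. -/
def diagDeviation (A : Matrix α α ℝ) (i : α) : ℝ :=
  Fintype.card α * A i i - ∑ j, A i j - ∑ j, A j i

lemma secondDiffMean_diag (A : Matrix α α ℝ) (i : α) : secondDiffMean A i i =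
    (Fintype.card α - 1) * diagDeviation A i + (∑ a, ∑ b, A a b - A.trace) := by
  simp only [secondDiffMean, diagDeviation, Matrix.of_apply]
  ring

variable [DecidableEq α]

lemma expect_pairDiff_mul_pairDiff (pt : κ × Bool ↪ α) (k : κ) (d b : α → ℝ) :
    𝔼 ρ : Perm α, pairDiff d (fun s => ρ (pt (k, s))) * pairDiff b (fun s => ρ (pt (k, s))) =
      2 * 𝔼 ρ : Perm α, d (ρ (pt (k, true))) * pairDiff b (fun s => ρ (pt (k, s))) := by
  have flip (s : Bool) :
      𝔼 ρ : Perm α, boolSign s * d (ρ (pt (k, s))) * pairDiff b (fun s => ρ (pt (k, s))) =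
        𝔼 ρ : Perm α, d (ρ (pt (k, true))) * pairDiff b (fun s => ρ (pt (k, s))) := by
    rw [← expect_mul_right_eq (fun ρ : Perm α => d (ρ (pt (k, true))) * _)
      (flipPairs pt fun _ => s)]
    refine expect_congr rfl fun ρ _ => ?_
    rw [pairDiff_flipPairs, Equiv.Perm.mul_apply, flipPairs_apply]
    cases s <;> simp [mul_left_comm, mul_assoc]
  simp only [pairDiff, sum_mul, expect_sum_comm] at flip ⊢
  simp only [flip, sum_const, card_univ, Fintype.card_bool, nsmul_eq_mul, Nat.cast_ofNat]

lemma expect_doubleDiff_mul_doubleDiff (pt : κ × Bool ↪ α) {k l : κ} (hkl : k ≠ l)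
    (C A : Matrix α α ℝ) :
    𝔼 ρ : Perm α, doubleDiff C (fun s => ρ (pt (k, s))) (fun s => ρ (pt (l, s))) *
        doubleDiff A (fun s => ρ (pt (k, s))) (fun s => ρ (pt (l, s))) =
      4 * 𝔼 ρ : Perm α, C (ρ (pt (k, true))) (ρ (pt (l, true))) *
        doubleDiff A (fun s => ρ (pt (k, s))) (fun s => ρ (pt (l, s))) := by
  have flip (s t : Bool) :
      𝔼 ρ : Perm α, boolSign s * boolSign t * C (ρ (pt (k, s))) (ρ (pt (l, t))) *
          doubleDiff A (fun s => ρ (pt (k, s))) (fun s => ρ (pt (l, s))) =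
        𝔼 ρ : Perm α, C (ρ (pt (k, true))) (ρ (pt (l, true))) *
          doubleDiff A (fun s => ρ (pt (k, s))) (fun s => ρ (pt (l, s))) := by
    rw [← expect_mul_right_eq (fun ρ : Perm α => C (ρ (pt (k, true))) (ρ (pt (l, true))) * _)
      (flipPairs pt (Function.update (fun _ => t) k s))]
    refine expect_congr rfl fun ρ _ => ?_
    rw [doubleDiff_flipPairs, Equiv.Perm.mul_apply, Equiv.Perm.mul_apply, flipPairs_apply,
      flipPairs_apply, Function.update_self, Function.update_of_ne hkl.symm]
    cases s <;> cases t <;> simp <;> ring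
  simp_rw [doubleDiff.eq_def C, sum_mul, expect_sum_comm, flip]
  simp only [sum_const, card_univ, Fintype.card_bool, nsmul_eq_mul, Nat.cast_ofNat]
  ring

lemma card_mul_card_sub_one_mul_expect_pairDiff (pt : κ × Bool ↪ α) (k : κ) (d b : α → ℝ) {n : ℝ}
    (hn : Fintype.card α = n) :
    n * (n - 1) * 𝔼 ρ : Perm α, pairDiff d (fun s => ρ (pt (k, s))) *
        pairDiff b (fun s => ρ (pt (k, s))) =
      2 * (n * ∑ i, d i * b i - (∑ i, d i) * ∑ i, b i) := by
  have ne : pt (k, true) ≠ pt (k, false) := pt.injective.ne (by simp)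
  have second := card_mul_card_sub_mul_expect_apply₂ (fun i j => d i * (b i - b j)) ne
  have diag_zero (i : α) : d i * (b i - b i) = 0 := by rw [sub_self, mul_zero]
  have off_diag : ∑ i, ∑ j, d i * (b i - b j) = n * ∑ i, d i * b i - (∑ i, d i) * ∑ i, b i := by
    simp only [mul_sub, sum_sub_distrib, sum_const, card_univ, nsmul_eq_mul, hn, ← mul_sum,
      sum_mul_sum]
  simp only [diag_zero, sum_const_zero, sub_zero, off_diag, hn] at second
  rw [expect_pairDiff_mul_pairDiff, mul_left_comm, ← second]
  simp [pairDiff, boolSign, sub_eq_add_neg]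

lemma expect_mul_secondDiff (C A : Matrix α α ℝ) {p q r s : α} (hpq : p ≠ q) (hpr : p ≠ r)
    (hps : p ≠ s) (hqr : q ≠ r) (hqs : q ≠ s) (hrs : r ≠ s) {n : ℝ} (hn : Fintype.card α = n) :
    (n - 2) * ((n - 3) * 𝔼 ρ : Perm α, C (ρ p) (ρ q) *
        (A (ρ p) (ρ q) - A (ρ p) (ρ s) - A (ρ r) (ρ q) + A (ρ r) (ρ s))) =
      𝔼 ρ : Perm α, C (ρ p) (ρ q) * secondDiffMean A (ρ p) (ρ q) := by
  rw [← hn, expect_apply₄ (fun i j a b => C i j * (A i j - A i b - A a j + A a b)) hpq hpr hps hqr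
    hqs hrs (χ := fun i j a => C i j * ((Fintype.card α - 2) * A i j - ∑ b, A i b -
      (Fintype.card α - 2) * A a j + ∑ b, A a b + A i i - A a i + A i a - A a a))]
  · refine expect_congr rfl fun ρ _ => ?_
    simp only [secondDiffMean, ← mul_sum, sum_add_distrib, sum_sub_distrib, sum_const, card_univ,
      nsmul_eq_mul, Matrix.trace, Matrix.diag, Matrix.of_apply]
    ring
  · intro i j a
    simp only [← mul_sum, sum_add_distrib, sum_sub_distrib, sum_const, card_univ, nsmul_eq_mul]
    ring

lemma descFactorial_mul_expect_doubleDiff {C : Matrix α α ℝ} (hcol : ∀ j, ∑ i, C i j = 0)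
    (hrow : ∀ i, ∑ j, C i j = 0) (A : Matrix α α ℝ) (pt : κ × Bool ↪ α) {k l : κ} (hkl : k ≠ l)
    {n : ℝ} (hn : Fintype.card α = n) :
    n * (n - 1) * (n - 2) * (n - 3) * 𝔼 ρ : Perm α,
        doubleDiff C (fun s => ρ (pt (k, s))) (fun s => ρ (pt (l, s))) *
          doubleDiff A (fun s => ρ (pt (k, s))) (fun s => ρ (pt (l, s))) =
      4 * ((n ^ 2 - 3 * n + 1) * ∑ i, ∑ j, C i j * A i j + ∑ i, ∑ j, C i j * A j i -
        (n - 1) * ∑ i, C i i * diagDeviation A i + C.trace * (A.trace - ∑ i, ∑ j, A i j)) := by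
  have pt_ne {u v : κ × Bool} (h : u ≠ v) : pt u ≠ pt v := pt.injective.ne h
  have four_points := expect_mul_secondDiff C A (p := pt (k, true)) (q := pt (l, true))
    (r := pt (k, false)) (s := pt (l, false)) (pt_ne (by simp [hkl])) (pt_ne (by simp))
    (pt_ne (by simp [hkl])) (pt_ne (by simp [hkl.symm])) (pt_ne (by simp)) (pt_ne (by simp [hkl]))
    hn
  have two_points := card_mul_card_sub_mul_expect_apply₂ (fun i j => C i j * secondDiffMean A i j)
    (p := pt (k, true)) (q := pt (l, true)) (pt_ne (by simp [hkl]))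
  have diag : ∑ i, C i i * secondDiffMean A i i =
      (n - 1) * ∑ i, C i i * diagDeviation A i + C.trace * (∑ i, ∑ j, A i j - A.trace) := by
    simp only [secondDiffMean_diag, hn, mul_add, sum_add_distrib, mul_left_comm _ (n - 1),
      ← mul_sum, ← sum_mul, Matrix.trace, Matrix.diag]
  have expand (x y : Bool → α) : doubleDiff A x y =
      A (x true) (y true) - A (x true) (y false) - A (x false) (y true) +
        A (x false) (y false) := by
    simp [doubleDiff, boolSign]
    ring
  rw [sum_sum_mul_secondDiffMean hcol hrow A hn, diag, hn] at two_points
  rw [expect_doubleDiff_mul_doubleDiff pt hkl]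
  simp only [expand]
  linear_combination 4 * n * (n - 1) * four_points + 4 * two_points

end Decoupling

section LinearStatistic

open Equiv (Perm)

variable {α ι : Type*} [Fintype ι] (pt : ι × Bool ↪ α)

lemma sum_sq_pairDiff_le [Fintype α] (d : α → ℝ) (ρ : Perm α) :
    ∑ i, pairDiff d (fun s => ρ (pt (i, s))) ^ 2 ≤ 2 * ∑ a, d a ^ 2 := by
  have sq_le (x : Bool → α) : pairDiff d x ^ 2 ≤ 2 * ∑ s, d (x s) ^ 2 := by
    simp only [pairDiff, boolSign, Fintype.sum_bool, cond_true, cond_false]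
    nlinarith [sq_nonneg (d (x true) + d (x false))]
  calc ∑ i, pairDiff d (fun s => ρ (pt (i, s))) ^ 2
      ≤ ∑ i, 2 * ∑ s, d (ρ (pt (i, s))) ^ 2 := sum_le_sum fun i _ => sq_le _
    _ = 2 * ∑ u, d (ρ (pt u)) ^ 2 := by rw [← mul_sum, Fintype.sum_prod_type]
    _ ≤ 2 * ∑ a, d a ^ 2 := by
      gcongr
      exact sum_comp_le_of_injective (ρ.injective.comp pt.injective) fun a => sq_nonneg (d a)

variable [Fintype α] [DecidableEq α]

lemma expect_exp_sum_mul_pairDiff_le {b : α → ℝ} {β : ℝ} (hb : ∀ a, |b a| ≤ β) (w : ι → ℝ) :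
    𝔼 ω : Perm α, exp (∑ i, w i * pairDiff b (fun s => ω (pt (i, s)))) ≤
      exp (2 * β ^ 2 * ∑ i, w i ^ 2) := by
  refine expect_le_of_forall_expect_mul_le (flipPairs pt) fun ω => ?_
  set v : ι → ℝ := fun i => w i * pairDiff b (fun s => ω (pt (i, s))) with hv
  have sq_le (i : ι) : v i * v i ≤ 4 * β ^ 2 * w i ^ 2 := by
    have diff_le : |pairDiff b (fun s => ω (pt (i, s)))| ≤ 2 * β := by
      simp only [pairDiff, boolSign, Fintype.sum_bool, cond_true, cond_false, one_mul, neg_mul]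
      linarith [abs_add_le (b (ω (pt (i, true)))) (-b (ω (pt (i, false)))),
        abs_neg (b (ω (pt (i, false)))), hb (ω (pt (i, true))), hb (ω (pt (i, false)))]
    nlinarith [mul_le_mul_of_nonneg_left (sq_le_sq' (abs_le.1 diff_le).1 (abs_le.1 diff_le).2)
      (sq_nonneg (w i))]
  calc 𝔼 ε : ι → Bool, exp (∑ i, w i * pairDiff b (fun s => (ω * flipPairs pt ε) (pt (i, s))))
      = 𝔼 ε : ι → Bool, exp ((boolSign ∘ ε) ⬝ᵥ v) := by
        simp only [pairDiff_flipPairs, mul_left_comm, dotProduct, Function.comp_apply, hv]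
    _ ≤ exp (v ⬝ᵥ v / 2) := expect_exp_rademacher_le v
    _ ≤ exp (2 * β ^ 2 * ∑ i, w i ^ 2) := by
      have := sum_le_sum fun i (_ : i ∈ univ) => sq_le i
      rw [← mul_sum] at this
      exact exp_le_exp.2 (by rw [dotProduct]; linarith)

lemma linearStatistic_eq_expect [Nonempty ι] {n : ℝ} (hn : Fintype.card α = n) (hn1 : 1 < n)
    (d b : α → ℝ) (ω : Perm α) :
    ∑ i, d i * b (ω i) - (∑ i, d i) * (∑ i, b i) / n =
      (n - 1) / (2 * Fintype.card ι) * 𝔼 ρ : Perm α, ∑ k, pairDiff d (fun s => ρ (pt (k, s))) *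
        pairDiff b (fun s => (ω * ρ) (pt (k, s))) := by
  have n_ne : n ≠ 0 := by linarith
  have n_sub_ne : n - 1 ≠ 0 := by linarith
  have term (k : ι) : 𝔼 ρ : Perm α, pairDiff d (fun s => ρ (pt (k, s))) *
      pairDiff b (fun s => (ω * ρ) (pt (k, s))) =
      2 * (∑ i, d i * b (ω i) - (∑ i, d i) * (∑ i, b i) / n) / (n - 1) := by
    have := card_mul_card_sub_one_mul_expect_pairDiff pt k d (b ∘ ω) hn
    simp only [Function.comp_apply, Equiv.sum_comp ω b] at this
    change n * (n - 1) * 𝔼 ρ : Perm α, pairDiff d (fun s => ρ (pt (k, s))) *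
      pairDiff b (fun s => (ω * ρ) (pt (k, s))) = _ at this
    field_simp
    linarith
  rw [expect_sum_comm, sum_congr rfl fun k _ => term k, sum_const, card_univ, nsmul_eq_mul]
  field_simp

theorem expect_exp_linearStatistic_le [Nontrivial α] (d : α → ℝ) {b : α → ℝ} {β : ℝ}
    (hb : ∀ a, |b a| ≤ β) (l : ℝ) :
    𝔼 ω : Perm α, exp (l * (∑ i, d i * b (ω i) - (∑ i, d i) * (∑ i, b i) / Fintype.card α)) ≤
      exp (4 * l ^ 2 * β ^ 2 * ∑ i, d i ^ 2) := by
  have one_lt : 1 < Fintype.card α := Fintype.one_lt_card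
  set m := Fintype.card α / 2
  have : NeZero m := ⟨by omega⟩
  obtain ⟨pt⟩ : Nonempty (Fin m × Bool ↪ α) := Function.Embedding.nonempty_of_card_le (by
    rw [Fintype.card_prod, Fintype.card_fin, Fintype.card_bool]
    omega)
  set θ : ℝ := (Fintype.card α - 1) / (2 * Fintype.card (Fin m)) with hθ
  have θ_sq_le : θ ^ 2 ≤ 1 := by
    have card_le : (Fintype.card α : ℝ) ≤ 2 * m + 1 := by exact_mod_cast (by omega)
    have card_ge : (1 : ℝ) < Fintype.card α := by exact_mod_cast one_lt
    rw [hθ, Fintype.card_fin]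
    exact pow_le_one₀ (div_nonneg (by linarith) (by linarith))
      ((div_le_one (by linarith)).2 (by linarith))
  have as_expect (ω : Perm α) :
      l * (∑ i, d i * b (ω i) - (∑ i, d i) * (∑ i, b i) / Fintype.card α) =
        𝔼 ρ : Perm α, ∑ k, l * θ * pairDiff d (fun s => ρ (pt (k, s))) *
          pairDiff b (fun s => (ω * ρ) (pt (k, s))) := by
    rw [linearStatistic_eq_expect pt rfl (Nat.one_lt_cast.2 one_lt), ← hθ, ← mul_assoc, mul_expect]
    simp only [mul_sum, mul_assoc]
  simp only [as_expect]
  refine expect_exp_expect_le fun ρ => ?_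
  rw [expect_mul_right_eq fun ω : Perm α => exp (∑ k, l * θ * pairDiff d (fun s => ρ (pt (k, s))) *
    pairDiff b (fun s => ω (pt (k, s))))]
  refine (expect_exp_sum_mul_pairDiff_le pt hb _).trans (exp_le_exp.2 ?_)
  calc 2 * β ^ 2 * ∑ k, (l * θ * pairDiff d (fun s => ρ (pt (k, s)))) ^ 2
      = 2 * β ^ 2 * l ^ 2 * θ ^ 2 * ∑ k, pairDiff d (fun s => ρ (pt (k, s))) ^ 2 := by
        simp only [mul_pow, ← mul_sum]
        ring
    _ ≤ 2 * β ^ 2 * l ^ 2 * 1 * (2 * ∑ i, d i ^ 2) := by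
        gcongr
        exact sum_sq_pairDiff_le pt d ρ
    _ = 4 * l ^ 2 * β ^ 2 * ∑ i, d i ^ 2 := by ring

end LinearStatistic

section Decomposition

open Equiv (Perm)
open Matrix

variable {α ι κ : Type*} [Fintype α]

/-- The permuted quadratic form `∑ᵢⱼ Cᵢⱼ A_{ω(i) ω(j)}`, the statistic `Q_QF` of the theorem. -/
def permQuadForm (C A : Matrix α α ℝ) (ω : Perm α) : ℝ := ∑ i, ∑ j, C i j * A (ω i) (ω j)

lemma permQuadForm_sq_le (C : Matrix α α ℝ) {A : Matrix α α ℝ} (hA : ∀ a b, |A a b| ≤ 1)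
    (ω : Perm α) :
    permQuadForm C A ω ^ 2 ≤ (Fintype.card α : ℝ) ^ 2 * ∑ i, ∑ j, C i j ^ 2 := by
  have cauchy_schwarz := sq_sum_le_card_mul_sum_sq (s := (univ : Finset (α × α)))
    (f := fun u => C u.1 u.2 * A (ω u.1) (ω u.2))
  simp only [card_univ, Fintype.card_prod, Fintype.sum_prod_type, ← sq, Nat.cast_pow]
    at cauchy_schwarz
  refine cauchy_schwarz.trans (mul_le_mul_of_nonneg_left ?_ (sq_nonneg _))
  refine sum_le_sum fun i _ => sum_le_sum fun j _ => ?_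
  rw [mul_pow]
  exact mul_le_of_le_one_right (sq_nonneg _) ((sq_le_one_iff_abs_le_one _).2 (hA _ _))

lemma abs_diagDeviation_le {A : Matrix α α ℝ} (hA : ∀ a b, |A a b| ≤ 1) (i : α) :
    |diagDeviation A i| ≤ 3 * Fintype.card α := by
  have abs_sum_le {f : α → ℝ} (hf : ∀ a, |f a| ≤ 1) : |∑ a, f a| ≤ Fintype.card α := by
    simpa using (abs_sum_le_sum_abs f univ).trans (sum_le_sum fun a _ => hf a)
  calc |diagDeviation A i|
      ≤ |Fintype.card α * A i i| + |∑ j, A i j| + |∑ j, A j i| :=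
        (abs_sub _ _).trans (add_le_add_left (abs_sub _ _) _)
    _ ≤ Fintype.card α * 1 + Fintype.card α + Fintype.card α := by
        rw [abs_mul, Nat.abs_cast]
        gcongr
        exacts [hA i i, abs_sum_le (hA i), abs_sum_le fun j => hA j i]
    _ = 3 * Fintype.card α := by ring

variable [DecidableEq α] [Fintype ι] [Fintype κ]

lemma expect_sum_chaosMatrix {C : Matrix α α ℝ} (hcol : ∀ j, ∑ i, C i j = 0)
    (hrow : ∀ i, ∑ j, C i j = 0) (A : Matrix α α ℝ) (pt : (ι ⊕ κ) × Bool ↪ α) (ω : Perm α) {n : ℝ}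
    (hn : Fintype.card α = n) :
    n * (n - 1) * (n - 2) * (n - 3) *
        𝔼 ρ : Perm α, ∑ i, ∑ j, chaosMatrix pt C A ρ (ω * ρ) i j =
      4 * Fintype.card ι * Fintype.card κ * ((n ^ 2 - 3 * n + 1) * permQuadForm C A ω +
        permQuadForm C Aᵀ ω - (n - 1) * ∑ i, C i i * diagDeviation A (ω i) +
        C.trace * (A.trace - ∑ i, ∑ j, A i j)) := by
  have reindex (i : α) : diagDeviation (A.submatrix ω ω) i = diagDeviation A (ω i) := by
    simp only [diagDeviation, submatrix_apply, Equiv.sum_comp ω (A (ω i)),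
      Equiv.sum_comp ω fun j => A j (ω i)]
  have sum_reindex : ∑ i, ∑ j, A (ω i) (ω j) = ∑ i, ∑ j, A i j := by
    simp only [fun i => Equiv.sum_comp ω (A i), Equiv.sum_comp ω fun i => ∑ j, A i j]
  have entry (k : ι) (l : κ) := descFactorial_mul_expect_doubleDiff hcol hrow (A.submatrix ω ω) pt
    (Sum.inl_ne_inr (a := k) (b := l)) hn
  have trace_reindex : (A.submatrix ω ω).trace = A.trace := Equiv.sum_comp ω fun i => A i i
  simp only [reindex, trace_reindex, submatrix_apply, sum_reindex] at entry
  calc n * (n - 1) * (n - 2) * (n - 3) *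
          𝔼 ρ : Perm α, ∑ i, ∑ j, chaosMatrix pt C A ρ (ω * ρ) i j
      = ∑ i, ∑ j, n * (n - 1) * (n - 2) * (n - 3) *
          𝔼 ρ : Perm α, chaosMatrix pt C A ρ (ω * ρ) i j := by
        simp only [expect_sum_comm, mul_sum]
    _ = _ := by
        refine (sum_congr rfl fun k _ => sum_congr rfl fun l _ => entry k l).trans ?_
        simp only [sum_const, card_univ, nsmul_eq_mul, permQuadForm, transpose_apply]
        ring

lemma permQuadForm_eq [Nonempty ι] [Nonempty κ] {C : Matrix α α ℝ} (hcol : ∀ j, ∑ i, C i j = 0)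
    (hrow : ∀ i, ∑ j, C i j = 0) (A : Matrix α α ℝ) (pt : (ι ⊕ κ) × Bool ↪ α) (ω : Perm α)
    {n q : ℝ} (hn : Fintype.card α = n) (hq : n ^ 2 - 3 * n + 1 = q) (hq0 : q ≠ 0) :
    permQuadForm C A ω =
      n * (n - 1) * (n - 2) * (n - 3) / (4 * Fintype.card ι * Fintype.card κ * q) *
          𝔼 ρ : Perm α, ∑ i, ∑ j, chaosMatrix pt C A ρ (ω * ρ) i j -
        permQuadForm C Aᵀ ω / q + ∑ i, C i i * ((n - 1) / q * diagDeviation A (ω i)) -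
        C.trace * (A.trace - ∑ i, ∑ j, A i j) / q := by
  have chaos := expect_sum_chaosMatrix hcol hrow A pt ω hn
  simp only [mul_left_comm (C _ _), ← mul_sum]
  rw [div_mul_eq_mul_div, chaos, hq]
  field_simp
  ring

end Decomposition

section Concentration

open Equiv (Perm)
open Matrix

lemma decoupling_scale_sq_le {n m : ℝ} (hn : 4 ≤ n) (hm : n ≤ 8 * m) :
    (n * (n - 1) * (n - 2) * (n - 3) / (4 * m * m * (n ^ 2 - 3 * n + 1))) ^ 2 ≤ 256 := by
  have q_pos : 0 < n ^ 2 - 3 * n + 1 := by nlinarith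
  have m_pos : 0 < m := by linarith
  have num_nonneg : 0 ≤ n * (n - 1) * (n - 2) * (n - 3) :=
    mul_nonneg (mul_nonneg (mul_nonneg (by linarith) (by linarith)) (by linarith)) (by linarith)
  have q_le : n ^ 2 - 3 * n + 1 ≤ 64 * m * m := by nlinarith
  rw [show (256 : ℝ) = 16 ^ 2 by norm_num]
  refine pow_le_pow_left₀ (by positivity) ((div_le_iff₀ (by positivity)).2 ?_) 2
  nlinarith

lemma diagDeviation_coeff_le {n : ℝ} (hn : 4 ≤ n) :
    (n - 1) / (n ^ 2 - 3 * n + 1) * (3 * n) ≤ 8 := by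
  rw [div_mul_eq_mul_div, div_le_iff₀ (by nlinarith)]
  nlinarith

variable {α : Type*} [Fintype α]

lemma sum_sq_diag_le (C : Matrix α α ℝ) : ∑ i, C i i ^ 2 ≤ ∑ i, ∑ j, C i j ^ 2 :=
  sum_le_sum fun i _ => single_le_sum (fun j _ => sq_nonneg (C i j)) (mem_univ i)

variable [DecidableEq α]

theorem exists_permQuadForm_decomposition (hα : 4 ≤ Fintype.card α) {C A : Matrix α α ℝ}
    (hcol : ∀ j, ∑ i, C i j = 0) (hrow : ∀ i, ∑ j, C i j = 0) (hA : ∀ a b, |A a b| ≤ 1) :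
    ∃ (m : ℕ) (pt : (Fin m ⊕ Fin m) × Bool ↪ α) (θ c : ℝ) (Y : Perm α → ℝ) (b : α → ℝ),
      θ ^ 2 ≤ 256 ∧ (∀ ω, Y ω ^ 2 ≤ ∑ i, ∑ j, C i j ^ 2) ∧ (∀ a, |b a| ≤ 8) ∧
      ∀ ω, permQuadForm C A ω = θ * 𝔼 ρ, ∑ i, ∑ j, chaosMatrix pt C A ρ (ω * ρ) i j + Y ω +
        ∑ i, C i i * b (ω i) + c := by
  obtain ⟨m, hm⟩ : ∃ m, m = Fintype.card α / 4 := ⟨_, rfl⟩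
  have : NeZero m := ⟨by omega⟩
  obtain ⟨pt⟩ : Nonempty ((Fin m ⊕ Fin m) × Bool ↪ α) :=
    Function.Embedding.nonempty_of_card_le (by
      rw [Fintype.card_prod, Fintype.card_sum, Fintype.card_fin, Fintype.card_bool]
      omega)
  obtain ⟨n, hn⟩ : ∃ n : ℝ, Fintype.card α = n := ⟨_, rfl⟩
  have four_le : 4 ≤ n := by rw [← hn]; exact_mod_cast hα
  have n_le : n ≤ 8 * m := by rw [← hn]; exact_mod_cast (by omega)
  have n_le_q : n ≤ n ^ 2 - 3 * n + 1 := by nlinarith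
  have q_pos : 0 < n ^ 2 - 3 * n + 1 := by linarith
  refine ⟨m, pt, _, -(C.trace * (A.trace - ∑ i, ∑ j, A i j) / (n ^ 2 - 3 * n + 1)),
    fun ω => -(permQuadForm C Aᵀ ω / (n ^ 2 - 3 * n + 1)),
    fun i => (n - 1) / (n ^ 2 - 3 * n + 1) * diagDeviation A i,
    decoupling_scale_sq_le four_le n_le, fun ω => ?_, fun i => ?_, fun ω => ?_⟩
  · rw [neg_sq, div_pow, div_le_iff₀' (by positivity)]
    refine (permQuadForm_sq_le C (fun a b => hA b a) ω).trans ?_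
    rw [hn]
    gcongr
  · rw [abs_mul, abs_of_nonneg (div_nonneg (by linarith) q_pos.le)]
    refine le_trans ?_ (diagDeviation_coeff_le four_le)
    gcongr
    · exact div_nonneg (by linarith) q_pos.le
    · exact hn ▸ abs_diagDeviation_le hA i
  · have := permQuadForm_eq hcol hrow A pt ω hn rfl q_pos.ne'
    simp only [Fintype.card_fin] at this
    linarith

theorem exists_expect_exp_permQuadForm_sub_le (hα : 4 ≤ Fintype.card α) {C A : Matrix α α ℝ}
    (hcol : ∀ j, ∑ i, C i j = 0) (hrow : ∀ i, ∑ j, C i j = 0) (hA : ∀ a b, |A a b| ≤ 1) {M : ℝ}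
    (hM : ∀ σ : Perm α, ‖C ⊙ A.submatrix σ σ‖ ≤ M) :
    ∃ k, ∀ l, 1179648 * (l * M) ^ 2 ≤ 1 →
      𝔼 ω, exp (l * (permQuadForm C A ω - k)) ≤ exp (147456 * l ^ 2 * ∑ i, ∑ j, C i j ^ 2) := by
  have : Nontrivial α := Fintype.one_lt_card_iff_nontrivial.1 (by omega)
  obtain ⟨m, pt, θ, c, Y, b, hθ, hY, hb, decomposition⟩ :=
    exists_permQuadForm_decomposition hα hcol hrow hA
  have V_nonneg : 0 ≤ ∑ i, ∑ j, C i j ^ 2 := by positivity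
  -- The chaos bound is applied at `μ = 3 l θ` with `θ ^ 2 ≤ 256`, hence the constants
  -- `147456 = 64 * 9 * 256` and `1179648 = 512 * 9 * 256`.
  refine ⟨𝔼 ω, Y ω + (∑ i, C i i) * (∑ i, b i) / Fintype.card α + c, fun l hl => ?_⟩
  have chaos : 𝔼 ω : Perm α,
      exp (3 * (l * (θ * 𝔼 ρ, ∑ i, ∑ j, chaosMatrix pt C A ρ (ω * ρ) i j))) ≤
        exp (147456 * l ^ 2 * ∑ i, ∑ j, C i j ^ 2) := by
    simp only [← mul_assoc]
    refine (expect_exp_expect_sum_chaosMatrix_le pt C A hA hM ?_).trans (exp_le_exp.2 ?_)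
    · nlinarith [mul_le_mul_of_nonneg_right hθ (sq_nonneg (l * M))]
    · refine mul_le_mul_of_nonneg_right ?_ V_nonneg
      nlinarith [mul_le_mul_of_nonneg_right hθ (sq_nonneg l)]
  have remainder : 𝔼 ω, exp (3 * (l * (Y ω - 𝔼 ω, Y ω))) ≤
      exp (147456 * l ^ 2 * ∑ i, ∑ j, C i j ^ 2) := by
    simp only [← mul_assoc]
    refine (expect_exp_le_of_sq_le hY _).trans (exp_le_exp.2 ?_)
    refine mul_le_mul_of_nonneg_right ?_ V_nonneg
    nlinarith [sq_nonneg l]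
  have linear : 𝔼 ω : Perm α, exp (3 * (l * (∑ i, C i i * b (ω i) -
      (∑ i, C i i) * (∑ i, b i) / Fintype.card α))) ≤
        exp (147456 * l ^ 2 * ∑ i, ∑ j, C i j ^ 2) := by
    simp only [← mul_assoc]
    refine (expect_exp_linearStatistic_le (fun i => C i i) hb _).trans (exp_le_exp.2 ?_)
    refine mul_le_mul ?_ (sum_sq_diag_le C) (by positivity) (by positivity)
    nlinarith [sq_nonneg l]
  refine (expect_congr rfl fun ω _ => ?_).trans_le (expect_exp_add_add_le chaos remainder linear)
  rw [decomposition ω]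
  ring_nf

theorem combinatorial_hanson_wright_general (hα : 4 ≤ Fintype.card α) {C A : Matrix α α ℝ}
    (hcol : ∀ j, ∑ i, C i j = 0) (hrow : ∀ i, ∑ j, C i j = 0) (hA : ∀ a b, |A a b| ≤ 1) {M : ℝ}
    (hM : ∀ σ : Perm α, ‖C ⊙ A.submatrix σ σ‖ ≤ M) {t : ℝ} (ht : 0 ≤ t) :
    (({ω | t ≤ permQuadForm C A ω - 𝔼 ω, permQuadForm C A ω} : Finset (Perm α)).dens : ℝ) ≤
      exp (-(1 / 1179648 * t ^ 2 / (∑ i, ∑ j, C i j ^ 2 + M * t))) := by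
  have M_nonneg : 0 ≤ M := (norm_nonneg _).trans (hM 1)
  obtain ⟨k, hk⟩ := exists_expect_exp_permQuadForm_sub_le hα hcol hrow hA hM
  rw [show (1179648 : ℝ) = 4 * 294912 by norm_num]
  refine dens_le_exp_of_expect_exp_le (by norm_num) (by positivity) M_nonneg ht fun l hl hlM => ?_
  have small : 1179648 * (l * M) ^ 2 ≤ 1 := by nlinarith [mul_nonneg hl M_nonneg]
  have neg_bound := hk (-l) (by rwa [neg_mul, neg_sq])
  rw [neg_sq] at neg_bound
  refine (expect_exp_sub_expect_le (hk l small) neg_bound).trans_eq ?_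
  ring_nf

end Concentration

section FinPerm

lemma permExp_eq_expect (N : ℕ) (f : Equiv.Perm (Fin N) → ℝ) : permExp N f = 𝔼 σ, f σ := by
  rw [permExp, Fintype.expect_eq_sum_div_card, Fintype.card_perm, Fintype.card_fin]

lemma permProb_eq_dens (N : ℕ) (p : Equiv.Perm (Fin N) → Prop) :
    permProb N p = (({σ | p σ} : Finset (Equiv.Perm (Fin N))).dens : ℝ) := by
  rw [permProb, nnratCast_dens, Fintype.card_perm, Fintype.card_fin]

lemma opNorm_eq_norm {m n : ℕ} (B : Matrix (Fin m) (Fin n) ℝ) : opNorm B = ‖B‖ :=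
  (Matrix.l2_opNorm_def B).symm

lemma norm_hadamard_submatrix_le_opNorm_add_sup' {N : ℕ} (C A : Matrix (Fin N) (Fin N) ℝ)
    (σ : Equiv.Perm (Fin N)) :
    ‖C.hadamard (A.submatrix σ σ)‖ ≤ opNorm C + univ.sup' ⟨1, mem_univ 1⟩
      fun σ : Equiv.Perm (Fin N) => opNorm (C.hadamard (A.submatrix σ σ)) := by
  simp only [opNorm_eq_norm]
  exact le_add_of_nonneg_of_le (norm_nonneg _) (le_sup'
    (fun σ : Equiv.Perm (Fin N) => ‖C.hadamard (A.submatrix σ σ)‖) (mem_univ σ))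

lemma frobNorm_sq {m n : ℕ} (B : Matrix (Fin m) (Fin n) ℝ) :
    frobNorm B ^ 2 = ∑ i, ∑ j, B i j ^ 2 :=
  Real.sq_sqrt (by positivity)

end FinPerm

end Development

/-- A combinatorial Hanson–Wright-type inequality (general `A`). -/
theorem combinatorial_hanson_wright :
    ∃ K : ℝ, 0 < K ∧
      ∀ (N : ℕ), 20 ≤ N →
      ∀ (C A : Matrix (Fin N) (Fin N) ℝ),
        (∀ k, ∑ i, C i k = 0) →
        (∀ k, ∑ j, C k j = 0) →
        (∀ i j, A i j ∈ Set.Icc (-1 : ℝ) 1) →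
        ∀ t : ℝ, 0 < t →
          permProb N (fun σ =>
              (∑ i, ∑ j, C i j * A (σ i) (σ j))
                - permExp N (fun σ' => ∑ i, ∑ j, C i j * A (σ' i) (σ' j)) ≥ t)
            ≤ Real.exp (-(K * t ^ 2 /
                ((frobNorm C) ^ 2 +
                  (opNorm C +
                    Finset.univ.sup' ⟨1, Finset.mem_univ 1⟩
                      (fun σ : Equiv.Perm (Fin N) =>
                        opNorm (Matrix.hadamard C (A.submatrix σ σ)))) * t))) := by
  refine ⟨1 / 1179648, by norm_num, fun N hN C A hcol hrow hA t ht => ?_⟩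
  simp only [permProb_eq_dens, permExp_eq_expect, frobNorm_sq, ge_iff_le]
  exact combinatorial_hanson_wright_general (by rw [Fintype.card_fin]; omega) hcol hrow
    (fun i j => abs_le.2 (hA i j)) (norm_hadamard_submatrix_le_opNorm_add_sup' C A) ht.le
end

section
/- There exists a universal constant K > 0 such that the following holds. Let N ≥ 20, let C = [c_{ij}] ∈ R^{N×N} be doubly centered, and let A = [a_{ij}] ∈ R^{N×N} be symmetric positive semidefinite with all entries in [−1,1]. Let Q_QF := Σ_{i,j∈[N]} c_{ij} a_{π(i)π(j)}. Then for every t > 0, P( Q_QF − E[Q_QF] ≥ t ) ≤ exp( − K t² / ( ‖C‖_F² + ‖C‖_op t ) ). -/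
open scoped BigOperators Classical

/-!
A positive semidefinite `A` is the Gram matrix of vectors `v i`, and since `C` is doubly centered
the `v i` may be centered and `C` symmetrized to `S`, so that `Q_QF` becomes a quadratic form in
the randomly permuted vectors. Adding its diagonal part gives a potential whose total increment
along all transpositions is proportional to `Q_QF - E[Q_QF]`, and exchangeability of a permutation
with its product by a transposition bounds the derivative of the moment generating function of
`Q_QF` by the tilted mean of a variance proxy, which is the quadratic form of `S ^ 2` plus a
multiple of `‖S‖_F ^ 2`.

The variance proxy is a statistic of the same kind whose own proxy, the form of `S ^ 4`, is at
most `‖S‖_op ^ 2` times itself. So the same argument bounds its exponential moments, and the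
duality between relative entropy and exponential moments carries this bound over to the tilted
mean. Integrating the resulting differential inequality and optimizing the Chernoff bound gives
the tail.
-/

namespace HansonWright

open Finset Function Real
open scoped InnerProductSpace

section ExponentialMoments

variable {Ω κ : Type*} [Fintype Ω]

lemma abs_exp_sub_exp_le (x y : ℝ) : |exp x - exp y| ≤ |x - y| * (exp x + exp y) := by
  wlog h : y ≤ x generalizing x y
  · simpa only [abs_sub_comm, add_comm] using this y x (le_of_not_ge h)
  have htangent : exp x * (y - x + 1) ≤ exp y := by
    calc exp x * (y - x + 1) ≤ exp x * exp (y - x) := by gcongr; exact add_one_le_exp _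
      _ = exp y := by rw [← exp_add, add_sub_cancel]
  rw [abs_of_nonneg (sub_nonneg.2 (exp_le_exp.2 h)), abs_of_nonneg (sub_nonneg.2 h)]
  linarith [mul_nonneg (sub_nonneg.2 h) (exp_pos y).le]

lemma expect_comp_involutive {τ : Ω → Ω} (hτ : Involutive τ) (F : Ω → ℝ) :
    𝔼 x, F (τ x) = 𝔼 x, F x :=
  Fintype.expect_equiv hτ.toPerm _ _ fun _ => rfl

-- `x ↦ (x, τ x)` is an exchangeable pair: symmetrizing turns the left side into
-- `1/2 𝔼 (P x - P (τ x)) (exp (θ f x) - exp (θ f (τ x)))`.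
lemma expect_sub_mul_exp_le {τ : Ω → Ω} (hτ : Involutive τ) (P f : Ω → ℝ) {θ : ℝ} (hθ : 0 ≤ θ) :
    𝔼 x, (P x - P (τ x)) * exp (θ * f x)
      ≤ θ * 𝔼 x, |P x - P (τ x)| * |f x - f (τ x)| * exp (θ * f x) := by
  have hanti : 𝔼 x, (P x - P (τ x)) * exp (θ * f (τ x))
      = -𝔼 x, (P x - P (τ x)) * exp (θ * f x) := by
    rw [← expect_comp_involutive hτ, ← expect_neg_distrib]
    refine expect_congr rfl fun x _ => ?_
    rw [hτ x]
    ring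
  have hsymm : 𝔼 x, |P x - P (τ x)| * |f x - f (τ x)| * exp (θ * f (τ x))
      = 𝔼 x, |P x - P (τ x)| * |f x - f (τ x)| * exp (θ * f x) := by
    rw [← expect_comp_involutive hτ]
    refine expect_congr rfl fun x _ => ?_
    rw [hτ x, abs_sub_comm (P _), abs_sub_comm (f _)]
  have hpair : 𝔼 x, (P x - P (τ x)) * (exp (θ * f x) - exp (θ * f (τ x)))
      ≤ 𝔼 x, θ * (|P x - P (τ x)| * |f x - f (τ x)| * (exp (θ * f x) + exp (θ * f (τ x)))) := by
    refine expect_le_expect fun x _ => ?_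
    calc (P x - P (τ x)) * (exp (θ * f x) - exp (θ * f (τ x)))
        ≤ |P x - P (τ x)| * |exp (θ * f x) - exp (θ * f (τ x))| := by
          rw [← abs_mul]
          exact le_abs_self _
      _ ≤ |P x - P (τ x)| *
            (|θ * f x - θ * f (τ x)| * (exp (θ * f x) + exp (θ * f (τ x)))) := by
          gcongr
          exact abs_exp_sub_exp_le _ _
      _ = θ * (|P x - P (τ x)| * |f x - f (τ x)| * (exp (θ * f x) + exp (θ * f (τ x)))) := by
          rw [← mul_sub, abs_mul, abs_of_nonneg hθ]
          ring
  simp only [mul_sub, mul_add, expect_sub_distrib, expect_add_distrib, ← mul_expect, hanti,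
    hsymm] at hpair
  linarith

lemma mul_expect_mul_exp_le [Fintype κ] {τ : κ → Ω → Ω} (hτ : ∀ k, Involutive (τ k))
    {P f : Ω → ℝ} {c : ℝ} (hP : ∀ x, ∑ k, (P x - P (τ k x)) = c * f x) {θ : ℝ} (hθ : 0 ≤ θ) :
    c * 𝔼 x, f x * exp (θ * f x)
      ≤ θ * 𝔼 x, (∑ k, |P x - P (τ k x)| * |f x - f (τ k x)|) * exp (θ * f x) := by
  calc c * 𝔼 x, f x * exp (θ * f x)
      = ∑ k, 𝔼 x, (P x - P (τ k x)) * exp (θ * f x) := by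
        simp only [mul_expect, ← mul_assoc, ← hP, sum_mul, expect_sum_comm]
    _ ≤ ∑ k, θ * 𝔼 x, |P x - P (τ k x)| * |f x - f (τ k x)| * exp (θ * f x) :=
        sum_le_sum fun k _ => expect_sub_mul_exp_le (hτ k) P f hθ
    _ = θ * 𝔼 x, (∑ k, |P x - P (τ k x)| * |f x - f (τ k x)|) * exp (θ * f x) := by
        simp only [← mul_sum, sum_mul, expect_sum_comm]

lemma expect_eq_zero_of_sum_sub_involutive [Fintype κ] {τ : κ → Ω → Ω}
    (hτ : ∀ k, Involutive (τ k)) {P f : Ω → ℝ} {c : ℝ} (hc : c ≠ 0)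
    (hP : ∀ x, ∑ k, (P x - P (τ k x)) = c * f x) : 𝔼 x, f x = 0 := by
  have h : c * 𝔼 x, f x = 0 := by
    simp only [mul_expect, ← hP, expect_sum_comm, expect_sub_distrib,
      expect_comp_involutive (hτ _), sub_self, sum_const_zero]
  exact (mul_eq_zero.1 h).resolve_left hc

lemma hasDerivAt_expect_exp (f : Ω → ℝ) (θ : ℝ) :
    HasDerivAt (fun s => 𝔼 x, exp (s * f x)) (𝔼 x, f x * exp (θ * f x)) θ := by
  simp only [Fintype.expect_eq_sum_div_card]
  refine (HasDerivAt.fun_sum fun x _ => ?_).div_const _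
  simpa [mul_comm] using ((hasDerivAt_id θ).mul_const (f x)).exp

-- Herbst's argument: the hypothesis says that `𝔼 exp (θ f) * exp (-K θ²)` is nonincreasing.
lemma expect_exp_le_of_expect_mul_exp_le [Nonempty Ω] {f : Ω → ℝ} {K θ₀ : ℝ} (hθ₀ : 0 ≤ θ₀)
    (h : ∀ θ, 0 ≤ θ → θ ≤ θ₀ →
      𝔼 x, f x * exp (θ * f x) ≤ 2 * K * θ * 𝔼 x, exp (θ * f x)) :
    𝔼 x, exp (θ₀ * f x) ≤ exp (K * θ₀ ^ 2) := by
  have hgauss (θ : ℝ) :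
      HasDerivAt (fun s : ℝ => exp (-(K * s ^ 2))) (exp (-(K * θ ^ 2)) * -(2 * K * θ)) θ := by
    convert ((hasDerivAt_pow 2 θ).const_mul K).fun_neg.exp using 2
    push_cast
    ring
  have hderiv (θ : ℝ) := (hasDerivAt_expect_exp f θ).fun_mul (hgauss θ)
  have hanti : AntitoneOn (fun s => (𝔼 x, exp (s * f x)) * exp (-(K * s ^ 2))) (Set.Icc 0 θ₀) := by
    refine antitoneOn_of_deriv_nonpos (convex_Icc _ _)
      (fun θ _ => (hderiv θ).continuousAt.continuousWithinAt)
      (fun θ _ => (hderiv θ).differentiableAt.differentiableWithinAt) fun θ hθ => ?_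
    rw [interior_Icc] at hθ
    rw [(hderiv θ).deriv]
    linarith [mul_le_mul_of_nonneg_right (h θ hθ.1.le hθ.2.le) (exp_pos (-(K * θ ^ 2))).le]
  have hends := hanti (Set.left_mem_Icc.2 hθ₀) (Set.right_mem_Icc.2 hθ₀) hθ₀
  simpa [exp_neg, ← div_eq_mul_inv, div_le_iff₀ (exp_pos _)] using hends

lemma one_le_expect_exp [Nonempty Ω] {f : Ω → ℝ} (hf : 0 ≤ 𝔼 x, f x) : 1 ≤ 𝔼 x, exp (f x) := by
  calc (1 : ℝ) ≤ 𝔼 x, (f x + 1) := by rw [expect_add_distrib, Fintype.expect_const]; linarith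
    _ ≤ 𝔼 x, exp (f x) := expect_le_expect fun x _ => add_one_le_exp _

-- The Donsker–Varadhan duality between relative entropy and exponential moments.
lemma expect_mul_exp_le_of_expect_exp_le_one [Nonempty Ω] {f g : Ω → ℝ} (hf : 0 ≤ 𝔼 x, f x)
    (hg : 𝔼 x, exp (g x) ≤ 1) : 𝔼 x, g x * exp (f x) ≤ 𝔼 x, f x * exp (f x) := by
  set m := 𝔼 x, exp (f x)
  have hm : 1 ≤ m := one_le_expect_exp hf
  have hyoung (x : Ω) :
      (g x + log m) * exp (f x) ≤ f x * exp (f x) - exp (f x) + m * exp (g x) := by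
    have htangent : exp (f x) * (g x + log m - f x + 1) ≤ m * exp (g x) := by
      calc exp (f x) * (g x + log m - f x + 1)
          ≤ exp (f x) * exp (g x + log m - f x) := by gcongr; exact add_one_le_exp _
        _ = m * exp (g x) := by
          rw [← exp_add, add_sub_cancel, exp_add, exp_log (by linarith), mul_comm]
    linarith
  have hmean := expect_le_expect (s := univ) fun x _ => hyoung x
  simp only [add_mul, expect_add_distrib, expect_sub_distrib, ← mul_expect] at hmean
  linarith [mul_nonneg (log_nonneg hm) (zero_le_one.trans hm),
    mul_le_mul_of_nonneg_left hg (zero_le_one.trans hm)]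

end ExponentialMoments

section QuadraticForms

lemma comp_swap_eq_add_single {α G : Type*} [DecidableEq α] [AddCommGroup G] (f : α → G)
    (i j : α) :
    f ∘ Equiv.swap i j = f + (Pi.single i (f j - f i) + Pi.single j (f i - f j)) := by
  ext k
  rcases eq_or_ne k i with rfl | hi
  · rcases eq_or_ne k j with rfl | hj <;> simp [*]
  · rcases eq_or_ne k j with rfl | hj <;> simp [*, Equiv.swap_apply_of_ne_of_ne]

variable {ι E : Type*} [Fintype ι] [NormedAddCommGroup E]

/-- The diagonal part of `quadForm`, which turns it into a Stein potential for the random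
transposition walk. -/
noncomputable def diagForm (S : Matrix ι ι ℝ) (w : ι → E) : ℝ :=
  ∑ i, S i i * ‖w i‖ ^ 2

/-- The mean of `quadForm S (w ∘ σ)` over permutations `σ`, in closed form; see
`expect_deviation`. -/
noncomputable def permMean (S : Matrix ι ι ℝ) (w : ι → E) : ℝ :=
  S.trace * (∑ i, ‖w i‖ ^ 2) / (Fintype.card ι - 1)

lemma diagForm_comp_swap [DecidableEq ι] (S : Matrix ι ι ℝ) (w : ι → E) (i j : ι) :
    diagForm S (w ∘ Equiv.swap i j)
      = diagForm S w + (S i i - S j j) * (‖w j‖ ^ 2 - ‖w i‖ ^ 2) := by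
  have hswap (k : ι) := congr_fun (comp_swap_eq_add_single (fun k => ‖w k‖ ^ 2) i j) k
  simp only [comp_apply, Pi.add_apply] at hswap
  simp only [diagForm, comp_apply, hswap, mul_add, sum_add_distrib, Pi.single_apply, mul_ite,
    mul_zero, sum_ite_eq', mem_univ, if_true]
  ring

lemma sum_sum_diagForm_sub_comp_swap [DecidableEq ι] (S : Matrix ι ι ℝ)
    (w : ι → E) :
    ∑ i, ∑ j, (diagForm S w - diagForm S (w ∘ Equiv.swap i j))
      = 2 * Fintype.card ι * diagForm S w - 2 * (S.trace * ∑ i, ‖w i‖ ^ 2) := by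
  have hterm (i j : ι) : diagForm S w - diagForm S (w ∘ Equiv.swap i j)
      = S i i * ‖w i‖ ^ 2 + S j j * ‖w j‖ ^ 2 - S i i * ‖w j‖ ^ 2 - S j j * ‖w i‖ ^ 2 := by
    rw [diagForm_comp_swap]
    ring
  simp only [hterm, sum_add_distrib, sum_sub_distrib, ← mul_sum, ← sum_mul, sum_const, card_univ,
    nsmul_eq_mul, mul_left_comm _ (Fintype.card ι : ℝ)]
  simp only [diagForm, Matrix.trace, Matrix.diag_apply]
  ring

lemma diagForm_sub_comp_swap_sq_le [DecidableEq ι] (S : Matrix ι ι ℝ) {w : ι → E} {b : ℝ}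
    (hb : ∀ i, ‖w i‖ ^ 2 ≤ b) (i j : ι) :
    (diagForm S w - diagForm S (w ∘ Equiv.swap i j)) ^ 2
      ≤ 2 * b ^ 2 * (S i i ^ 2 + S j j ^ 2) := by
  have hnorm : (‖w j‖ ^ 2 - ‖w i‖ ^ 2) ^ 2 ≤ b ^ 2 :=
    sq_le_sq' (by linarith [hb i, sq_nonneg ‖w j‖]) (by linarith [hb j, sq_nonneg ‖w i‖])
  calc (diagForm S w - diagForm S (w ∘ Equiv.swap i j)) ^ 2
      = (S i i - S j j) ^ 2 * (‖w j‖ ^ 2 - ‖w i‖ ^ 2) ^ 2 := by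
        rw [diagForm_comp_swap]
        ring
    _ ≤ 2 * (S i i ^ 2 + S j j ^ 2) * b ^ 2 := by
        gcongr
        linarith [sq_nonneg (S i i + S j j)]
    _ = _ := by ring

variable [InnerProductSpace ℝ E]

/-- The action of a real matrix on families of vectors, i.e. `S ⊗ id` on `ι → E`. -/
def matAct (S : Matrix ι ι ℝ) (w : ι → E) (i : ι) : E :=
  ∑ j, S i j • w j

/-- The vector-valued quadratic form `∑ i j, S i j ⟪w i, w j⟫`. For `w` a Gram representation of
`A`, the statistic `∑ i j, S i j A (σ i) (σ j)` is `quadForm S (w ∘ σ)`. -/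
noncomputable def quadForm (S : Matrix ι ι ℝ) (w : ι → E) : ℝ :=
  ∑ i, ⟪matAct S w i, w i⟫_ℝ

variable {S : Matrix ι ι ℝ} {w : ι → E}

lemma quadForm_eq_sum (S : Matrix ι ι ℝ) (w : ι → E) :
    quadForm S w = ∑ i, ∑ j, S i j * ⟪w i, w j⟫_ℝ := by
  simp only [quadForm, matAct, sum_inner, real_inner_smul_left]
  exact sum_congr rfl fun i _ => sum_congr rfl fun j _ => by rw [real_inner_comm]

lemma matAct_add (S : Matrix ι ι ℝ) (w z : ι → E) : matAct S (w + z) = matAct S w + matAct S z := by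
  ext i
  simp only [matAct, Pi.add_apply, smul_add, sum_add_distrib]

lemma sum_inner_matAct_comm (hS : S.IsSymm) (w z : ι → E) :
    ∑ i, ⟪matAct S w i, z i⟫_ℝ = ∑ i, ⟪matAct S z i, w i⟫_ℝ := by
  simp only [matAct, sum_inner, real_inner_smul_left]
  rw [sum_comm]
  simp only [hS.apply, real_inner_comm]

lemma quadForm_add (hS : S.IsSymm) (w z : ι → E) :
    quadForm S (w + z) = quadForm S w + 2 * ∑ i, ⟪matAct S w i, z i⟫_ℝ + quadForm S z := by
  simp only [quadForm, matAct_add, Pi.add_apply, inner_add_left, inner_add_right, sum_add_distrib,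
    sum_inner_matAct_comm hS z w]
  ring

lemma quadForm_transpose_mul_self (B : Matrix ι ι ℝ) (w : ι → E) :
    quadForm (B.transpose * B) w = ∑ k, ‖matAct B w k‖ ^ 2 := by
  simp only [quadForm_eq_sum, matAct, ← real_inner_self_eq_norm_sq, sum_inner, inner_sum,
    real_inner_smul_left, real_inner_smul_right, Matrix.mul_apply, Matrix.transpose_apply, sum_mul]
  rw [sum_comm_cycle]
  refine sum_congr rfl fun k _ => sum_congr rfl fun i _ => sum_congr rfl fun j _ => ?_
  rw [real_inner_comm (w j)]
  ring

lemma quadForm_sq (hS : S.IsSymm) (w : ι → E) :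
    quadForm (S * S) w = ∑ k, ‖matAct S w k‖ ^ 2 := by
  simpa only [hS.eq] using quadForm_transpose_mul_self S w

lemma trace_sq (hS : S.IsSymm) : (S * S).trace = ∑ i, ∑ j, S i j ^ 2 := by
  simp only [Matrix.trace, Matrix.diag_apply, Matrix.mul_apply, sq]
  simp only [hS.apply]

lemma sum_apply_self_sq_le_trace_sq (hS : S.IsSymm) : ∑ i, S i i ^ 2 ≤ (S * S).trace := by
  rw [trace_sq hS]
  exact sum_le_sum fun i _ =>
    single_le_sum (f := fun j => S i j ^ 2) (fun j _ => sq_nonneg _) (mem_univ i)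

lemma quadForm_sub_apply (S T : Matrix ι ι ℝ) (w : ι → E) :
    quadForm (S - T) w = quadForm S w - quadForm T w := by
  simp only [quadForm_eq_sum, Matrix.sub_apply, sub_mul, sum_sub_distrib]

lemma quadForm_smul_apply (c : ℝ) (S : Matrix ι ι ℝ) (w : ι → E) :
    quadForm (c • S) w = c * quadForm S w := by
  simp only [quadForm_eq_sum, Matrix.smul_apply, smul_eq_mul, mul_assoc, mul_sum]

section DecidableEq

variable [DecidableEq ι]

lemma sum_inner_single (u : ι → E) (i : ι) (x : E) :
    ∑ k, ⟪u k, (Pi.single i x : ι → E) k⟫_ℝ = ⟪u i, x⟫_ℝ := by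
  rw [Fintype.sum_eq_single i fun k hk => by rw [Pi.single_eq_of_ne hk, inner_zero_right],
    Pi.single_eq_same]

lemma matAct_single (S : Matrix ι ι ℝ) (i j : ι) (x : E) :
    matAct S (Pi.single j x) i = S i j • x := by
  rw [matAct, Fintype.sum_eq_single j fun k hk => by rw [Pi.single_eq_of_ne hk, smul_zero],
    Pi.single_eq_same]

lemma quadForm_single (S : Matrix ι ι ℝ) (i : ι) (x : E) :
    quadForm S (Pi.single i x) = S i i * ‖x‖ ^ 2 := by
  rw [quadForm, sum_inner_single, matAct_single, real_inner_smul_left, real_inner_self_eq_norm_sq]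

lemma quadForm_single_add_single (hS : S.IsSymm) (i j : ι) (x y : E) :
    quadForm S (Pi.single i x + Pi.single j y : ι → E)
      = S i i * ‖x‖ ^ 2 + 2 * (S i j * ⟪x, y⟫_ℝ) + S j j * ‖y‖ ^ 2 := by
  rw [quadForm_add hS, sum_inner_single, matAct_single, quadForm_single, quadForm_single,
    real_inner_smul_left, hS.apply i j]

lemma quadForm_comp_swap (hS : S.IsSymm) (w : ι → E) (i j : ι) :
    quadForm S (w ∘ Equiv.swap i j)
      = quadForm S w + 2 * ⟪matAct S w i - matAct S w j, w j - w i⟫_ℝ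
        + (S i i + S j j - 2 * S i j) * ‖w j - w i‖ ^ 2 := by
  have hcross : ∑ k, ⟪matAct S w k,
      (Pi.single i (w j - w i) + Pi.single j (w i - w j) : ι → E) k⟫_ℝ
      = ⟪matAct S w i - matAct S w j, w j - w i⟫_ℝ := by
    simp only [Pi.add_apply, inner_add_right, sum_add_distrib, sum_inner_single, inner_sub_left,
      inner_sub_right]
    ring
  rw [comp_swap_eq_add_single, quadForm_add hS, hcross, quadForm_single_add_single hS,
    ← neg_sub (w j) (w i), inner_neg_right, norm_neg, real_inner_self_eq_norm_sq]
  ring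

end DecidableEq

lemma sum_sum_inner_sub_sub (u : ι → E) (hw : ∑ i, w i = 0) :
    ∑ i, ∑ j, ⟪u i - u j, w j - w i⟫_ℝ = -2 * (Fintype.card ι * ∑ i, ⟪u i, w i⟫_ℝ) := by
  have hleft : ∑ i, ∑ j, ⟪u i, w j - w i⟫_ℝ = -(Fintype.card ι * ∑ i, ⟪u i, w i⟫_ℝ) := by
    simp only [← inner_sum, sum_sub_distrib, hw, sum_const, card_univ, zero_sub, inner_neg_right,
      ← Nat.cast_smul_eq_nsmul ℝ, real_inner_smul_right, sum_neg_distrib, mul_sum]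
  have hright : ∑ i, ∑ j, ⟪u j, w j - w i⟫_ℝ = Fintype.card ι * ∑ i, ⟪u i, w i⟫_ℝ := by
    rw [sum_comm, ← neg_inj, ← hleft, ← sum_neg_distrib]
    refine sum_congr rfl fun i _ => ?_
    rw [← sum_neg_distrib]
    exact sum_congr rfl fun j _ => by rw [← inner_neg_right, neg_sub]
  simp only [inner_sub_left, sum_sub_distrib, hleft, hright]
  ring

lemma sum_norm_sub_sq (hw : ∑ i, w i = 0) (x : E) :
    ∑ j, ‖w j - x‖ ^ 2 = ∑ j, ‖w j‖ ^ 2 + Fintype.card ι * ‖x‖ ^ 2 := by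
  simp only [norm_sub_sq_real, sum_add_distrib, sum_sub_distrib, ← mul_sum, ← sum_inner, hw,
    inner_zero_left, sum_const, card_univ, nsmul_eq_mul]
  ring

lemma sum_sum_mul_norm_sub_sq (a : ι → ℝ) (hw : ∑ i, w i = 0) :
    ∑ i, ∑ j, a i * ‖w j - w i‖ ^ 2
      = Fintype.card ι * ∑ i, a i * ‖w i‖ ^ 2 + (∑ i, a i) * ∑ j, ‖w j‖ ^ 2 := by
  simp only [← mul_sum, sum_norm_sub_sq hw, mul_add, sum_add_distrib, sum_mul,
    mul_left_comm _ (Fintype.card ι : ℝ)]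
  ring

lemma sum_sum_apply_mul_norm_sub_sq (hS : S.IsSymm) (hrow : ∀ i, ∑ j, S i j = 0) (w : ι → E) :
    ∑ i, ∑ j, S i j * ‖w j - w i‖ ^ 2 = -2 * quadForm S w := by
  have hnorm : ∑ i, ∑ j, S i j * ‖w i‖ ^ 2 = 0 := by
    simp only [← sum_mul, hrow, zero_mul, sum_const_zero]
  have hnorm' : ∑ i, ∑ j, S i j * ‖w j‖ ^ 2 = 0 := by
    rw [sum_comm]
    simpa only [hS.apply] using hnorm
  have hexpand (i j : ι) : S i j * ‖w j - w i‖ ^ 2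
      = S i j * ‖w j‖ ^ 2 + S i j * ‖w i‖ ^ 2 + -2 * (S i j * ⟪w i, w j⟫_ℝ) := by
    rw [norm_sub_sq_real, real_inner_comm]
    ring
  simp only [hexpand, sum_add_distrib, ← mul_sum, hnorm, hnorm', quadForm_eq_sum]
  ring

end QuadraticForms

section RandomTransposition

variable {ι E : Type*} [Fintype ι] [DecidableEq ι] [NormedAddCommGroup E] [InnerProductSpace ℝ E]
  {S : Matrix ι ι ℝ} {w : ι → E} {b : ℝ}

/-- The function whose total increment along all transpositions is proportional to the centered
quadratic form, see `sum_sum_steinPotential_sub_comp_swap`. The quadratic form is not quite such a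
function itself, because a transposition changes its diagonal terms differently. -/
noncomputable def steinPotential (S : Matrix ι ι ℝ) (w : ι → E) : ℝ :=
  quadForm S w + diagForm S w

lemma sum_sum_quadForm_sub_comp_swap (hS : S.IsSymm) (hrow : ∀ i, ∑ j, S i j = 0)
    (hw : ∑ i, w i = 0) :
    ∑ i, ∑ j, (quadForm S w - quadForm S (w ∘ Equiv.swap i j))
      = 4 * (Fintype.card ι - 1) * quadForm S w - 2 * Fintype.card ι * diagForm S w
        - 2 * (S.trace * ∑ i, ‖w i‖ ^ 2) := by
  have hdiag : ∑ i, ∑ j, S i i * ‖w j - w i‖ ^ 2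
      = Fintype.card ι * diagForm S w + S.trace * ∑ i, ‖w i‖ ^ 2 :=
    sum_sum_mul_norm_sub_sq _ hw
  have hdiag' : ∑ i, ∑ j, S j j * ‖w j - w i‖ ^ 2 = ∑ i, ∑ j, S i i * ‖w j - w i‖ ^ 2 := by
    rw [sum_comm]
    simp only [norm_sub_rev]
  have hcross : ∑ i, ∑ j, ⟪matAct S w i - matAct S w j, w j - w i⟫_ℝ
      = -2 * (Fintype.card ι * quadForm S w) := sum_sum_inner_sub_sub _ hw
  have hterm (i j : ι) : quadForm S w - quadForm S (w ∘ Equiv.swap i j)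
      = -2 * ⟪matAct S w i - matAct S w j, w j - w i⟫_ℝ - S i i * ‖w j - w i‖ ^ 2
        - S j j * ‖w j - w i‖ ^ 2 + 2 * (S i j * ‖w j - w i‖ ^ 2) := by
    rw [quadForm_comp_swap hS]
    ring
  simp only [hterm, sum_add_distrib, sum_sub_distrib, hdiag', hdiag]
  simp only [← mul_sum, hcross, sum_sum_apply_mul_norm_sub_sq hS hrow]
  ring

lemma sum_sum_steinPotential_sub_comp_swap [Nontrivial ι] (hS : S.IsSymm)
    (hrow : ∀ i, ∑ j, S i j = 0) (hw : ∑ i, w i = 0) :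
    ∑ i, ∑ j, (steinPotential S w - steinPotential S (w ∘ Equiv.swap i j))
      = 4 * (Fintype.card ι - 1) * (quadForm S w - permMean S w) := by
  have hcard : (Fintype.card ι - 1 : ℝ) ≠ 0 :=
    sub_ne_zero.2 (mod_cast Fintype.one_lt_card.ne')
  simp only [steinPotential, add_sub_add_comm, sum_add_distrib,
    sum_sum_quadForm_sub_comp_swap hS hrow hw, sum_sum_diagForm_sub_comp_swap, permMean]
  field_simp
  ring

lemma quadForm_sub_comp_swap_sq_le (hS : S.IsSymm) (hb : ∀ i, ‖w i‖ ^ 2 ≤ b) (i j : ι) :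
    (quadForm S w - quadForm S (w ∘ Equiv.swap i j)) ^ 2
      ≤ 64 * b * (‖matAct S w i‖ ^ 2 + ‖matAct S w j‖ ^ 2)
        + 96 * b ^ 2 * (S i i ^ 2 + S j j ^ 2 + 4 * S i j ^ 2) := by
  set u := matAct S w
  set s := S i i + S j j - 2 * S i j
  have hsub (x y : E) : ‖x - y‖ ^ 2 ≤ 2 * (‖x‖ ^ 2 + ‖y‖ ^ 2) := by
    linarith [parallelogram_law_with_norm ℝ x y, mul_self_nonneg ‖x + y‖]
  have hdiam : ‖w j - w i‖ ^ 2 ≤ 4 * b := by linarith [hsub (w j) (w i), hb i, hb j]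
  have hinner : ⟪u i - u j, w j - w i⟫_ℝ ^ 2 ≤ 8 * b * (‖u i‖ ^ 2 + ‖u j‖ ^ 2) := by
    calc ⟪u i - u j, w j - w i⟫_ℝ ^ 2 ≤ (‖u i - u j‖ * ‖w j - w i‖) ^ 2 :=
          sq_le_sq' (neg_le_of_abs_le (abs_real_inner_le_norm _ _)) (real_inner_le_norm _ _)
      _ = ‖u i - u j‖ ^ 2 * ‖w j - w i‖ ^ 2 := mul_pow ..
      _ ≤ 2 * (‖u i‖ ^ 2 + ‖u j‖ ^ 2) * (4 * b) := by gcongr; exact hsub _ _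
      _ = 8 * b * (‖u i‖ ^ 2 + ‖u j‖ ^ 2) := by ring
  have hs : s ^ 2 ≤ 3 * (S i i ^ 2 + S j j ^ 2 + 4 * S i j ^ 2) := by
    linarith [sq_nonneg (S i i - S j j), sq_nonneg (S i i + 2 * S i j),
      sq_nonneg (S j j + 2 * S i j)]
  calc (quadForm S w - quadForm S (w ∘ Equiv.swap i j)) ^ 2
      = (2 * ⟪u i - u j, w j - w i⟫_ℝ + s * ‖w j - w i‖ ^ 2) ^ 2 := by
        rw [quadForm_comp_swap hS]
        ring
    _ ≤ 2 * ((2 * ⟪u i - u j, w j - w i⟫_ℝ) ^ 2 + (s * ‖w j - w i‖ ^ 2) ^ 2) := add_sq_le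
    _ = 8 * ⟪u i - u j, w j - w i⟫_ℝ ^ 2 + 2 * (s ^ 2 * (‖w j - w i‖ ^ 2) ^ 2) := by ring
    _ ≤ 8 * (8 * b * (‖u i‖ ^ 2 + ‖u j‖ ^ 2))
        + 2 * (3 * (S i i ^ 2 + S j j ^ 2 + 4 * S i j ^ 2) * (4 * b) ^ 2) := by gcongr
    _ = _ := by ring

lemma abs_mul_abs_sub_comp_swap_le (hS : S.IsSymm) (hb : ∀ i, ‖w i‖ ^ 2 ≤ b) (i j : ι) :
    |steinPotential S w - steinPotential S (w ∘ Equiv.swap i j)|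
        * |quadForm S w - quadForm S (w ∘ Equiv.swap i j)|
      ≤ 96 * b * (‖matAct S w i‖ ^ 2 + ‖matAct S w j‖ ^ 2)
        + 145 * b ^ 2 * (S i i ^ 2 + S j j ^ 2) + 576 * b ^ 2 * S i j ^ 2 := by
  have hq := quadForm_sub_comp_swap_sq_le hS hb i j
  have hd := diagForm_sub_comp_swap_sq_le S hb i j
  set δq := quadForm S w - quadForm S (w ∘ Equiv.swap i j)
  set δd := diagForm S w - diagForm S (w ∘ Equiv.swap i j)
  have hP : steinPotential S w - steinPotential S (w ∘ Equiv.swap i j) = δq + δd :=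
    add_sub_add_comm ..
  calc |steinPotential S w - steinPotential S (w ∘ Equiv.swap i j)| * |δq|
      ≤ (|δq| + |δd|) * |δq| := by rw [hP]; gcongr; exact abs_add_le _ _
    _ ≤ 3 / 2 * δq ^ 2 + 1 / 2 * δd ^ 2 := by
      rw [← sq_abs δq, ← sq_abs δd]
      linarith [sq_nonneg (|δq| - |δd|)]
    _ ≤ _ := by linarith

lemma sum_sum_abs_mul_abs_sub_comp_swap_le [Nonempty ι] (hS : S.IsSymm)
    (hb : ∀ i, ‖w i‖ ^ 2 ≤ b) :
    ∑ i, ∑ j, |steinPotential S w - steinPotential S (w ∘ Equiv.swap i j)|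
        * |quadForm S w - quadForm S (w ∘ Equiv.swap i j)|
      ≤ 1000 * b * Fintype.card ι * (quadForm (S * S) w + b * (S * S).trace) := by
  have hb0 : 0 ≤ b := (sq_nonneg _).trans (hb (Classical.arbitrary ι))
  have hcard : (1 : ℝ) ≤ Fintype.card ι := mod_cast Fintype.card_pos
  have hR : 0 ≤ quadForm (S * S) w := by
    rw [quadForm_sq hS]
    positivity
  have hF : 0 ≤ (S * S).trace := by
    rw [trace_sq hS]
    positivity
  have hdiag := sum_apply_self_sq_le_trace_sq hS
  calc ∑ i, ∑ j, |steinPotential S w - steinPotential S (w ∘ Equiv.swap i j)|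
        * |quadForm S w - quadForm S (w ∘ Equiv.swap i j)|
      ≤ ∑ i, ∑ j, (96 * b * (‖matAct S w i‖ ^ 2 + ‖matAct S w j‖ ^ 2)
        + 145 * b ^ 2 * (S i i ^ 2 + S j j ^ 2) + 576 * b ^ 2 * S i j ^ 2) :=
        sum_le_sum fun i _ => sum_le_sum fun j _ =>
          abs_mul_abs_sub_comp_swap_le hS hb i j
    _ = 192 * b * Fintype.card ι * quadForm (S * S) w
        + (290 * b ^ 2 * Fintype.card ι * ∑ i, S i i ^ 2 + 576 * b ^ 2 * (S * S).trace) := by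
        simp only [sum_add_distrib, ← mul_sum, sum_const, card_univ, nsmul_eq_mul, quadForm_sq hS,
          trace_sq hS]
        ring
    _ ≤ 192 * b * Fintype.card ι * quadForm (S * S) w
        + (290 * b ^ 2 * Fintype.card ι * (S * S).trace
          + 576 * b ^ 2 * Fintype.card ι * (S * S).trace) := by
        gcongr _ + (_ * ?_ + ?_ * _)
        exact le_mul_of_one_le_right (by positivity) hcard
    _ ≤ 1000 * b * Fintype.card ι * (quadForm (S * S) w + b * (S * S).trace) := by
        have hbR : 0 ≤ b * Fintype.card ι * quadForm (S * S) w := by positivity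
        have hbF : 0 ≤ b ^ 2 * Fintype.card ι * (S * S).trace := by positivity
        linarith

end RandomTransposition

section SpectralBound

variable {ι E : Type*} [Fintype ι] [NormedAddCommGroup E] [InnerProductSpace ℝ E]
  {S M : Matrix ι ι ℝ} {L : ℝ}

open scoped MatrixOrder Matrix.Norms.L2Operator in
lemma exists_eq_transpose_mul_self (hM : M.PosSemidef) :
    ∃ B : Matrix ι ι ℝ, M = B.transpose * B := by
  classical
  exact CStarAlgebra.nonneg_iff_eq_star_mul_self.1 hM.nonneg

lemma quadForm_nonneg (hM : M.PosSemidef) (w : ι → E) : 0 ≤ quadForm M w := by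
  obtain ⟨B, rfl⟩ := exists_eq_transpose_mul_self hM
  rw [quadForm_transpose_mul_self]
  positivity

variable [DecidableEq ι]

lemma posSemidef_sq_smul_sq_sub (hS : S.IsSymm) (hL : (L ^ 2 • 1 - S * S).PosSemidef) :
    (L ^ 2 • (S * S) - S * S * (S * S)).PosSemidef := by
  have h := hL.conjTranspose_mul_mul_same S
  rwa [Matrix.conjTranspose_eq_transpose_of_trivial, hS.eq, mul_sub, sub_mul, mul_smul_comm,
    mul_one, smul_mul_assoc, mul_assoc S (S * S) S, mul_assoc S S S, ← mul_assoc S S (S * S)] at h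

lemma quadForm_sq_sq_le (hS : S.IsSymm) (hL : (L ^ 2 • 1 - S * S).PosSemidef) (w : ι → E) :
    quadForm (S * S * (S * S)) w ≤ L ^ 2 * quadForm (S * S) w := by
  have h := quadForm_nonneg (posSemidef_sq_smul_sq_sub hS hL) w
  rwa [quadForm_sub_apply, quadForm_smul_apply, sub_nonneg] at h

lemma trace_sq_sq_le (hS : S.IsSymm) (hL : (L ^ 2 • 1 - S * S).PosSemidef) :
    (S * S * (S * S)).trace ≤ L ^ 2 * (S * S).trace := by
  have h := (posSemidef_sq_smul_sq_sub hS hL).trace_nonneg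
  rwa [Matrix.trace_sub, Matrix.trace_smul, smul_eq_mul, sub_nonneg] at h

end SpectralBound

section PermutedFamily

lemma involutive_mul_swap {α : Type*} [DecidableEq α] (i j : α) :
    Involutive fun σ : Equiv.Perm α => σ * Equiv.swap i j :=
  fun σ => Equiv.mul_swap_mul_self i j σ

variable {ι E : Type*} [Fintype ι] [NormedAddCommGroup E] {S : Matrix ι ι ℝ} {w : ι → E}
  {b L : ℝ}

/-- Symmetric doubly centered matrices; by symmetry the columns need not be mentioned. -/
structure IsSymmCentered (S : Matrix ι ι ℝ) : Prop where
  isSymm : S.IsSymm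
  row_sum (i : ι) : ∑ j, S i j = 0

/-- Families of vectors with mean zero and squared norms at most `b`. Both conditions are invariant
under reindexing by a permutation. -/
structure IsCenteredFamily (b : ℝ) (w : ι → E) : Prop where
  sum_eq_zero : ∑ i, w i = 0
  norm_sq_le (i : ι) : ‖w i‖ ^ 2 ≤ b

lemma IsCenteredFamily.comp_perm (hw : IsCenteredFamily b w) (σ : Equiv.Perm ι) :
    IsCenteredFamily b (w ∘ σ) where
  sum_eq_zero := (Equiv.sum_comp σ w).trans hw.sum_eq_zero
  norm_sq_le i := hw.norm_sq_le (σ i)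

lemma IsCenteredFamily.nonneg [Nonempty ι] (hw : IsCenteredFamily b w) : 0 ≤ b :=
  (sq_nonneg _).trans (hw.norm_sq_le (Classical.arbitrary ι))

lemma IsSymmCentered.mul_self (hS : IsSymmCentered S) : IsSymmCentered (S * S) where
  isSymm := by rw [Matrix.IsSymm, Matrix.transpose_mul, hS.isSymm.eq]
  row_sum i := by
    simp only [Matrix.mul_apply]
    rw [sum_comm]
    simp only [← mul_sum, hS.row_sum, mul_zero, sum_const_zero]

lemma IsSymmCentered.trace_sq_nonneg (hS : IsSymmCentered S) : 0 ≤ (S * S).trace := by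
  rw [trace_sq hS.isSymm]
  positivity

lemma permMean_comp_perm (S : Matrix ι ι ℝ) (w : ι → E) (σ : Equiv.Perm ι) :
    permMean S (w ∘ σ) = permMean S w := by
  rw [permMean, permMean, ← Equiv.sum_comp σ fun i => ‖w i‖ ^ 2]
  rfl

lemma card_le_two_mul_card_sub_one [Nontrivial ι] :
    (Fintype.card ι : ℝ) ≤ 2 * (Fintype.card ι - 1) := by
  have h : (2 : ℝ) ≤ Fintype.card ι := mod_cast Fintype.one_lt_card
  linarith

lemma permMean_le [Nontrivial ι] (hS : 0 ≤ S.trace) (hw : IsCenteredFamily b w) :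
    permMean S w ≤ 2 * b * S.trace := by
  have hcard : (0 : ℝ) < Fintype.card ι - 1 := sub_pos.2 (mod_cast Fintype.one_lt_card)
  have hM : ∑ i, ‖w i‖ ^ 2 ≤ Fintype.card ι * b := by
    simpa using sum_le_card_nsmul univ _ _ fun i _ => hw.norm_sq_le i
  rw [permMean, div_le_iff₀ hcard]
  calc S.trace * ∑ i, ‖w i‖ ^ 2 ≤ S.trace * (2 * (Fintype.card ι - 1) * b) := by
        gcongr
        exact hM.trans (mul_le_mul_of_nonneg_right card_le_two_mul_card_sub_one hw.nonneg)
    _ = 2 * b * S.trace * (Fintype.card ι - 1) := by ring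

variable [InnerProductSpace ℝ E]

/-- The centered quadratic form as a random variable on the permutations of the index set. -/
noncomputable def deviation (S : Matrix ι ι ℝ) (w : ι → E) (σ : Equiv.Perm ι) : ℝ :=
  quadForm S (w ∘ σ) - permMean S w

variable [DecidableEq ι]

lemma sum_steinPotential_sub_mul_swap [Nontrivial ι] (hS : IsSymmCentered S)
    (hw : IsCenteredFamily b w) (σ : Equiv.Perm ι) :
    ∑ k : ι × ι, (steinPotential S (w ∘ σ) - steinPotential S (w ∘ (σ * Equiv.swap k.1 k.2)))
      = 4 * (Fintype.card ι - 1) * deviation S w σ := by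
  rw [Fintype.sum_prod_type, deviation, ← permMean_comp_perm S w σ]
  exact sum_sum_steinPotential_sub_comp_swap hS.isSymm hS.row_sum (hw.comp_perm σ).sum_eq_zero

lemma sum_abs_mul_abs_sub_mul_swap_le [Nonempty ι] (hS : IsSymmCentered S)
    (hw : IsCenteredFamily b w) (σ : Equiv.Perm ι) :
    ∑ k : ι × ι, |steinPotential S (w ∘ σ) - steinPotential S (w ∘ (σ * Equiv.swap k.1 k.2))|
        * |deviation S w σ - deviation S w (σ * Equiv.swap k.1 k.2)|
      ≤ 1000 * b * Fintype.card ι * (quadForm (S * S) (w ∘ σ) + b * (S * S).trace) := by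
  simp only [Fintype.sum_prod_type, deviation, sub_sub_sub_cancel_right]
  exact sum_sum_abs_mul_abs_sub_comp_swap_le hS.isSymm (hw.comp_perm σ).norm_sq_le

lemma expect_deviation [Nontrivial ι] (hS : IsSymmCentered S) (hw : IsCenteredFamily b w) :
    𝔼 σ, deviation S w σ = 0 :=
  expect_eq_zero_of_sum_sub_involutive (fun k : ι × ι => involutive_mul_swap k.1 k.2)
    (mul_ne_zero four_ne_zero (sub_ne_zero.2 (mod_cast Fintype.one_lt_card.ne')))
    (sum_steinPotential_sub_mul_swap hS hw)

lemma expect_deviation_mul_exp_le [Nontrivial ι] (hS : IsSymmCentered S)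
    (hw : IsCenteredFamily b w) {θ : ℝ} (hθ : 0 ≤ θ) :
    𝔼 σ, deviation S w σ * exp (θ * deviation S w σ)
      ≤ 500 * b * θ * 𝔼 σ : Equiv.Perm ι,
          (quadForm (S * S) (w ∘ σ) + b * (S * S).trace) * exp (θ * deviation S w σ) := by
  set V := 𝔼 σ : Equiv.Perm ι,
    (quadForm (S * S) (w ∘ σ) + b * (S * S).trace) * exp (θ * deviation S w σ)
  have hcard : (0 : ℝ) < Fintype.card ι - 1 := sub_pos.2 (mod_cast Fintype.one_lt_card)
  have hV : 0 ≤ V := expect_nonneg fun σ _ => mul_nonneg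
    (add_nonneg (by rw [quadForm_sq hS.isSymm]; positivity)
      (mul_nonneg hw.nonneg hS.trace_sq_nonneg)) (exp_pos _).le
  have hstein : 4 * (Fintype.card ι - 1) * 𝔼 σ, deviation S w σ * exp (θ * deviation S w σ)
      ≤ 4 * (Fintype.card ι - 1) * (500 * b * θ * V) := by
    calc 4 * (Fintype.card ι - 1) * 𝔼 σ, deviation S w σ * exp (θ * deviation S w σ)
        ≤ θ * 𝔼 σ : Equiv.Perm ι, (∑ k : ι × ι,
            |steinPotential S (w ∘ σ) - steinPotential S (w ∘ (σ * Equiv.swap k.1 k.2))|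
              * |deviation S w σ - deviation S w (σ * Equiv.swap k.1 k.2)|)
            * exp (θ * deviation S w σ) :=
          mul_expect_mul_exp_le (τ := fun (k : ι × ι) σ => σ * Equiv.swap k.1 k.2)
            (P := fun σ => steinPotential S (w ∘ σ)) (fun k => involutive_mul_swap k.1 k.2)
            (sum_steinPotential_sub_mul_swap hS hw) hθ
      _ ≤ θ * 𝔼 σ : Equiv.Perm ι,
            1000 * b * Fintype.card ι * (quadForm (S * S) (w ∘ σ) + b * (S * S).trace)
              * exp (θ * deviation S w σ) := by
          gcongr with σ
          exact sum_abs_mul_abs_sub_mul_swap_le hS hw σ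
      _ = 1000 * b * θ * V * Fintype.card ι := by
          simp only [mul_assoc, ← mul_expect, V]
          ring
      _ ≤ 1000 * b * θ * V * (2 * (Fintype.card ι - 1)) := by
          have := hw.nonneg
          gcongr
          exact card_le_two_mul_card_sub_one
      _ = 4 * (Fintype.card ι - 1) * (500 * b * θ * V) := by ring
  exact le_of_mul_le_mul_left hstein (by positivity)

lemma le_two_mul_of_le_mul_add {c x y : ℝ} (hc : 0 ≤ c) (hc' : 2 * c ≤ 1) (hy : 0 ≤ y)
    (h : x ≤ c * (x + y)) : x ≤ 2 * c * y := by
  rcases le_total x 0 with hx | hx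
  · exact hx.trans (by positivity)
  · linarith [mul_le_mul_of_nonneg_right hc' hx]

lemma quadForm_sq_sq_add_trace_le [Nontrivial ι] (hS : IsSymmCentered S)
    (hw : IsCenteredFamily b w) (hL : (L ^ 2 • 1 - S * S).PosSemidef) (σ : Equiv.Perm ι) :
    quadForm (S * S * (S * S)) (w ∘ σ) + b * (S * S * (S * S)).trace
      ≤ L ^ 2 * (deviation (S * S) w σ + 3 * b * (S * S).trace) := by
  have hb := hw.nonneg
  calc quadForm (S * S * (S * S)) (w ∘ σ) + b * (S * S * (S * S)).trace
      ≤ L ^ 2 * quadForm (S * S) (w ∘ σ) + b * (L ^ 2 * (S * S).trace) := by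
        gcongr
        exacts [quadForm_sq_sq_le hS.isSymm hL _, trace_sq_sq_le hS.isSymm hL]
    _ = L ^ 2 * (deviation (S * S) w σ + permMean (S * S) w + b * (S * S).trace) := by
        rw [deviation, sub_add_cancel]
        ring
    _ ≤ L ^ 2 * (deviation (S * S) w σ + 2 * b * (S * S).trace + b * (S * S).trace) := by
        gcongr
        exact permMean_le hS.trace_sq_nonneg hw
    _ = L ^ 2 * (deviation (S * S) w σ + 3 * b * (S * S).trace) := by ring

lemma expect_deviation_sq_mul_exp_le [Nontrivial ι] (hS : IsSymmCentered S)
    (hw : IsCenteredFamily b w) (hL : (L ^ 2 • 1 - S * S).PosSemidef) {θ : ℝ} (hθ : 0 ≤ θ)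
    (hθL : 1000 * b * θ * L ^ 2 ≤ 1) :
    𝔼 σ, deviation (S * S) w σ * exp (θ * deviation (S * S) w σ)
      ≤ 2 * (1500 * b ^ 2 * L ^ 2 * (S * S).trace) * θ
          * 𝔼 σ, exp (θ * deviation (S * S) w σ) := by
  set F := (S * S).trace
  set f := deviation (S * S) w
  set m := 𝔼 σ, exp (θ * f σ)
  set X := 𝔼 σ, f σ * exp (θ * f σ)
  have hb := hw.nonneg
  have hF : 0 ≤ F := hS.trace_sq_nonneg
  have hm : 0 ≤ m := expect_nonneg fun σ _ => (exp_pos _).le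
  have hX : X ≤ 500 * b * θ * L ^ 2 * (X + 3 * b * F * m) := by
    calc X ≤ 500 * b * θ * 𝔼 σ : Equiv.Perm ι, (quadForm (S * S * (S * S)) (w ∘ σ)
            + b * (S * S * (S * S)).trace) * exp (θ * f σ) :=
          expect_deviation_mul_exp_le hS.mul_self hw hθ
      _ ≤ 500 * b * θ * 𝔼 σ, L ^ 2 * (f σ + 3 * b * F) * exp (θ * f σ) := by
          gcongr with σ
          exact quadForm_sq_sq_add_trace_le hS hw hL σ
      _ = 500 * b * θ * L ^ 2 * (X + 3 * b * F * m) := by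
          simp only [mul_assoc, add_mul, mul_add, expect_add_distrib, ← mul_expect, X, m]
  exact (le_two_mul_of_le_mul_add (by positivity) (by linarith) (by positivity) hX).trans_eq
    (by ring)

lemma expect_exp_quadForm_sq_le [Nontrivial ι] (hS : IsSymmCentered S)
    (hw : IsCenteredFamily b w) (hL : (L ^ 2 • 1 - S * S).PosSemidef) {η : ℝ} (hη : 0 ≤ η)
    (hηL : 1000 * b * η * L ^ 2 ≤ 1) :
    𝔼 σ : Equiv.Perm ι, exp (η * quadForm (S * S) (w ∘ σ))
      ≤ exp (4 * b * (S * S).trace * η) := by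
  set F := (S * S).trace
  have hb := hw.nonneg
  have hF : 0 ≤ F := hS.trace_sq_nonneg
  have hdev : 𝔼 σ, exp (η * deviation (S * S) w σ) ≤ exp (1500 * b ^ 2 * L ^ 2 * F * η ^ 2) :=
    expect_exp_le_of_expect_mul_exp_le hη fun θ hθ hθη =>
      expect_deviation_sq_mul_exp_le hS hw hL hθ ((by gcongr : _ ≤ _).trans hηL)
  calc 𝔼 σ : Equiv.Perm ι, exp (η * quadForm (S * S) (w ∘ σ))
      = exp (η * permMean (S * S) w) * 𝔼 σ, exp (η * deviation (S * S) w σ) := by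
        simp only [mul_expect, deviation, ← exp_add, ← mul_add, add_sub_cancel]
    _ ≤ exp (η * (2 * b * F)) * exp (1500 * b ^ 2 * L ^ 2 * F * η ^ 2) := by
        gcongr
        exact permMean_le hF hw
    _ = exp (2 * b * F * η + 3 / 2 * (b * F * η) * (1000 * b * η * L ^ 2)) := by
        rw [← exp_add]
        ring_nf
    _ ≤ exp (4 * b * F * η) := by
        rw [exp_le_exp]
        have hbFη : 0 ≤ b * F * η := by positivity
        linarith [mul_le_mul_of_nonneg_left hηL hbFη]

lemma expect_quadForm_sq_mul_exp_le [Nontrivial ι] (hS : IsSymmCentered S)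
    (hw : IsCenteredFamily b w) (hL : (L ^ 2 • 1 - S * S).PosSemidef) {θ η : ℝ} (hη : 0 ≤ η)
    (hηL : 1000 * b * η * L ^ 2 ≤ 1) :
    η * 𝔼 σ : Equiv.Perm ι, quadForm (S * S) (w ∘ σ) * exp (θ * deviation S w σ)
      ≤ θ * (𝔼 σ, deviation S w σ * exp (θ * deviation S w σ))
        + 4 * b * (S * S).trace * η * 𝔼 σ, exp (θ * deviation S w σ) := by
  have hmean : 0 ≤ 𝔼 σ, θ * deviation S w σ := by
    rw [← mul_expect, expect_deviation hS hw, mul_zero]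
  have hmgf : 𝔼 σ : Equiv.Perm ι,
      exp (η * quadForm (S * S) (w ∘ σ) - 4 * b * (S * S).trace * η) ≤ 1 := by
    simp only [exp_sub, ← expect_div]
    exact div_le_one_of_le₀ (expect_exp_quadForm_sq_le hS hw hL hη hηL) (exp_pos _).le
  have hdual := expect_mul_exp_le_of_expect_exp_le_one hmean hmgf
  simp only [sub_mul, mul_assoc, expect_sub_distrib, ← mul_expect] at hdual
  simp only [mul_assoc]
  linarith

lemma expect_exp_deviation_le [Nontrivial ι] (hS : IsSymmCentered S)
    (hw : IsCenteredFamily b w) (hL0 : 0 ≤ L) (hL : (L ^ 2 • 1 - S * S).PosSemidef) {θ : ℝ}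
    (hθ : 0 ≤ θ) (hθL : 1000 * b * L * θ ≤ 1) :
    𝔼 σ, exp (θ * deviation S w σ) ≤ exp (2500 * b ^ 2 * (S * S).trace * θ ^ 2) := by
  have hb := hw.nonneg
  refine expect_exp_le_of_expect_mul_exp_le hθ fun s hs hsθ => ?_
  set F := (S * S).trace
  set f := deviation S w
  set m := 𝔼 σ, exp (s * f σ)
  set X := 𝔼 σ, f σ * exp (s * f σ)
  set Y := 𝔼 σ : Equiv.Perm ι, quadForm (S * S) (w ∘ σ) * exp (s * f σ)
  have hX : X ≤ 500 * b * s * (Y + b * F * m) := by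
    refine (expect_deviation_mul_exp_le hS hw hs).trans_eq ?_
    simp only [add_mul, expect_add_distrib, ← mul_expect, Y, m, f, F]
  rcases hs.eq_or_lt with rfl | hs0
  · simpa using hX
  have hsL : 1000 * b * (1000 * b * s ^ 2) * L ^ 2 ≤ 1 := by
    calc 1000 * b * (1000 * b * s ^ 2) * L ^ 2 = (1000 * b * L * s) ^ 2 := by ring
      _ ≤ 1 ^ 2 := by gcongr; exact (by gcongr : _ ≤ 1000 * b * L * θ).trans hθL
      _ = 1 := one_pow 2
  have hY : 1000 * b * s * Y ≤ X + 4000 * b ^ 2 * F * s * m := by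
    refine le_of_mul_le_mul_left ?_ hs0
    linarith [expect_quadForm_sq_mul_exp_le hS hw hL (θ := s) (by positivity) hsL]
  linarith

end PermutedFamily

section SymmetricPart

variable {ι E : Type*} [NormedAddCommGroup E] [InnerProductSpace ℝ E]

/-- The symmetric part of a matrix, which has the same quadratic form. -/
noncomputable def symmPart (C : Matrix ι ι ℝ) : Matrix ι ι ℝ :=
  (1 / 2 : ℝ) • (C + C.transpose)

lemma symmPart_isSymm (C : Matrix ι ι ℝ) : (symmPart C).IsSymm := by
  ext i j
  simp only [symmPart, Matrix.transpose_apply, Matrix.smul_apply, Matrix.add_apply, add_comm]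

variable [Fintype ι]

lemma isSymmCentered_symmPart {C : Matrix ι ι ℝ} (hcol : ∀ j, ∑ i, C i j = 0)
    (hrow : ∀ i, ∑ j, C i j = 0) : IsSymmCentered (symmPart C) where
  isSymm := symmPart_isSymm C
  row_sum i := by
    simp only [symmPart, Matrix.smul_apply, Matrix.add_apply, Matrix.transpose_apply, ← smul_sum,
      sum_add_distrib, hrow, hcol, add_zero, smul_zero]

lemma quadForm_symmPart (C : Matrix ι ι ℝ) (w : ι → E) :
    quadForm (symmPart C) w = quadForm C w := by
  have htranspose : ∑ i, ∑ j, C j i * ⟪w i, w j⟫_ℝ = ∑ i, ∑ j, C i j * ⟪w i, w j⟫_ℝ := by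
    rw [sum_comm]
    simp only [real_inner_comm]
  simp only [symmPart, quadForm_smul_apply]
  simp only [quadForm_eq_sum, Matrix.add_apply, Matrix.transpose_apply, add_mul, sum_add_distrib,
    htranspose]
  ring

lemma trace_symmPart_sq_le (C : Matrix ι ι ℝ) :
    (symmPart C * symmPart C).trace ≤ ∑ i, ∑ j, C i j ^ 2 := by
  have hterm (i j : ι) : symmPart C i j ^ 2 ≤ (C i j ^ 2 + C j i ^ 2) / 2 := by
    simp only [symmPart, Matrix.smul_apply, Matrix.add_apply, Matrix.transpose_apply, smul_eq_mul]
    linarith [sq_nonneg (C i j - C j i)]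
  calc (symmPart C * symmPart C).trace = ∑ i, ∑ j, symmPart C i j ^ 2 :=
        trace_sq (symmPart_isSymm C)
    _ ≤ ∑ i, ∑ j, (C i j ^ 2 + C j i ^ 2) / 2 :=
        sum_le_sum fun i _ => sum_le_sum fun j _ => hterm i j
    _ = ∑ i, ∑ j, C i j ^ 2 := by
        simp only [← sum_div, sum_add_distrib]
        rw [sum_comm (f := fun i j => C j i ^ 2), add_self_div_two]

open scoped Matrix.Norms.L2Operator

lemma norm_symmPart_le [DecidableEq ι] (C : Matrix ι ι ℝ) : ‖symmPart C‖ ≤ ‖C‖ := by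
  have htranspose : ‖C.transpose‖ = ‖C‖ := by
    rw [← Matrix.conjTranspose_eq_transpose_of_trivial, Matrix.l2_opNorm_conjTranspose]
  calc ‖symmPart C‖ = 1 / 2 * ‖C + C.transpose‖ := by
        rw [symmPart, norm_smul, norm_of_nonneg one_half_pos.le]
    _ ≤ 1 / 2 * (‖C‖ + ‖C.transpose‖) := by gcongr; exact norm_add_le _ _
    _ = ‖C‖ := by rw [htranspose]; ring

lemma posSemidef_sq_smul_one_sub_sq [DecidableEq ι] {S : Matrix ι ι ℝ} {L : ℝ} (hS : S.IsSymm)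
    (hL : ‖S‖ ≤ L) : (L ^ 2 • 1 - S * S).PosSemidef := by
  refine Matrix.PosSemidef.of_dotProduct_mulVec_nonneg ?_ fun x => ?_
  · rw [Matrix.IsHermitian, Matrix.conjTranspose_eq_transpose_of_trivial, Matrix.transpose_sub,
      Matrix.transpose_mul, hS.eq, Matrix.transpose_smul, Matrix.transpose_one]
  have hnorm (y : ι → ℝ) : ‖WithLp.toLp 2 y‖ ^ 2 = y ⬝ᵥ y :=
    (EuclideanSpace.real_norm_sq_eq _).trans (sum_congr rfl fun i _ => sq _)
  have hSx : x ⬝ᵥ ((S * S).mulVec x) = S.mulVec x ⬝ᵥ S.mulVec x := by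
    rw [← Matrix.mulVec_mulVec, Matrix.dotProduct_mulVec, ← Matrix.mulVec_transpose, hS.eq]
  have hbound : S.mulVec x ⬝ᵥ S.mulVec x ≤ L ^ 2 * (x ⬝ᵥ x) := by
    rw [← hnorm, ← hnorm, ← mul_pow]
    gcongr
    exact (S.l2_opNorm_mulVec (WithLp.toLp 2 x)).trans (by gcongr)
  simpa [Matrix.sub_mulVec, Matrix.smul_mulVec, dotProduct_sub, hSx] using hbound

lemma opNorm_eq_norm {m n : ℕ} (M : Matrix (Fin m) (Fin n) ℝ) : opNorm M = ‖M‖ :=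
  rfl

end SymmetricPart

section GramFamily

variable {ι E : Type*} [Fintype ι] [NormedAddCommGroup E]

lemma exists_isCenteredFamily_sub [NormedSpace ℝ E] [Nonempty ι] {v : ι → E} {b : ℝ}
    (hv : ∀ i j, ‖v i - v j‖ ^ 2 ≤ b) : ∃ x, IsCenteredFamily b fun i => v i - x := by
  have hcard : (Fintype.card ι : ℝ) ≠ 0 := mod_cast Fintype.card_ne_zero
  refine ⟨∑ j, (Fintype.card ι : ℝ)⁻¹ • v j, ?_, fun i => ?_⟩
  · rw [sum_sub_distrib, sum_const, card_univ, ← Nat.cast_smul_eq_nsmul ℝ, ← smul_sum,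
      smul_inv_smul₀ hcard, sub_self]
  have hmem : ∑ j, (Fintype.card ι : ℝ)⁻¹ • v j ∈ Metric.closedBall (v i) √b :=
    (convex_closedBall _ _).sum_mem (fun _ _ => by positivity) (by simp [hcard]) fun j _ => by
      rw [mem_closedBall_iff_norm]
      exact le_sqrt_of_sq_le (hv j i)
  rw [mem_closedBall_iff_norm'] at hmem
  calc ‖v i - ∑ j, (Fintype.card ι : ℝ)⁻¹ • v j‖ ^ 2 ≤ √b ^ 2 := by gcongr
    _ = b := sq_sqrt ((sq_nonneg _).trans (hv i i))

variable [InnerProductSpace ℝ E]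

lemma exists_inner_eq {A : Matrix ι ι ℝ} (hA : A.PosSemidef) :
    ∃ v : ι → EuclideanSpace ℝ ι, ∀ i j, ⟪v i, v j⟫_ℝ = A i j := by
  obtain ⟨B, rfl⟩ := exists_eq_transpose_mul_self hA
  refine ⟨fun i => WithLp.toLp 2 fun k => B k i, fun i j => ?_⟩
  simp [Matrix.mul_apply, PiLp.inner_apply, mul_comm]

lemma quadForm_sub_const {S : Matrix ι ι ℝ} (hS : IsSymmCentered S) (w : ι → E) (x : E) :
    quadForm S (fun i => w i - x) = quadForm S w := by
  have hact (i : ι) : matAct S (fun i => w i - x) i = matAct S w i := by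
    simp only [matAct, smul_sub, sum_sub_distrib, ← sum_smul, hS.row_sum, zero_smul, sub_zero]
  have hsum : ∑ i, matAct S w i = 0 := by
    simp only [matAct]
    rw [sum_comm]
    simp only [← sum_smul, ← hS.isSymm.apply _ _, hS.row_sum, zero_smul, sum_const_zero]
  simp only [quadForm, hact, inner_sub_right, sum_sub_distrib, ← sum_inner, hsum, inner_zero_left,
    sub_zero]

end GramFamily

section Tail

variable {N : ℕ}

lemma permExp_eq_expect (f : Equiv.Perm (Fin N) → ℝ) : permExp N f = 𝔼 σ, f σ := by
  rw [permExp, Fintype.expect_eq_sum_div_card, Fintype.card_perm, Fintype.card_fin]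

lemma permProb_eq_expect (p : Equiv.Perm (Fin N) → Prop) :
    permProb N p = 𝔼 σ, if p σ then 1 else 0 := by
  rw [Fintype.expect_eq_sum_div_card, Fintype.card_perm, Fintype.card_fin, permProb, sum_boole]

lemma permProb_ge_le (f : Equiv.Perm (Fin N) → ℝ) {θ : ℝ} (hθ : 0 ≤ θ) (t : ℝ) :
    permProb N (fun σ => f σ ≥ t) ≤ exp (-(θ * t)) * 𝔼 σ, exp (θ * f σ) := by
  rw [permProb_eq_expect, mul_expect]
  refine expect_le_expect fun σ _ => ?_
  rw [← exp_add]
  split_ifs with h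
  · exact one_le_exp (by linarith [mul_le_mul_of_nonneg_left h hθ])
  · exact (exp_pos _).le

-- Markov's inequality at `θ = t / (2 * v + ℓ * t)`. If that denominator vanishes, so does the one
-- in the bound, which is then `1` since `x / 0 = 0`.
lemma permProb_ge_le_of_expect_exp_le {f : Equiv.Perm (Fin N) → ℝ} {v ℓ t : ℝ} (hv : 0 ≤ v)
    (hℓ : 0 ≤ ℓ) (ht : 0 ≤ t)
    (hf : ∀ θ, 0 ≤ θ → ℓ * θ ≤ 1 → 𝔼 σ, exp (θ * f σ) ≤ exp (v * θ ^ 2)) :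
    permProb N (fun σ => f σ ≥ t) ≤ exp (-(t ^ 2 / (4 * v + 2 * ℓ * t))) := by
  set D := 2 * v + ℓ * t
  have hD : 0 ≤ D := by positivity
  set θ := t / D
  have hθ : 0 ≤ θ := by positivity
  have hℓθ : ℓ * θ ≤ 1 := by
    rw [← mul_div_assoc]
    exact div_le_one_of_le₀ (by simp only [D]; linarith) hD
  have hDθ : D * θ ^ 2 = θ * t := by
    rcases hD.eq_or_lt with h | h
    · simp [θ, ← h]
    · simp only [θ]
      field_simp
  have hvθ : 2 * (v * θ ^ 2) ≤ θ * t := by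
    rw [← hDθ, ← mul_assoc]
    gcongr
    exact le_add_of_nonneg_right (by positivity)
  calc permProb N (fun σ => f σ ≥ t) ≤ exp (-(θ * t)) * exp (v * θ ^ 2) :=
        (permProb_ge_le f hθ t).trans (by gcongr; exact hf θ hθ hℓθ)
    _ ≤ exp (-(θ * t / 2)) := by
        rw [← exp_add, exp_le_exp]
        linarith
    _ = exp (-(t ^ 2 / (4 * v + 2 * ℓ * t))) := by
        rw [show 4 * v + 2 * ℓ * t = D * 2 by ring, ← div_div, sq, mul_div_right_comm t]

end Tail

section QuadraticStatistic

variable {N : ℕ} {C A : Matrix (Fin N) (Fin N) ℝ} {b : ℝ}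

/-- The quadratic permutation statistic `Q_QF`. -/
def quadStat (C A : Matrix (Fin N) (Fin N) ℝ) (σ : Equiv.Perm (Fin N)) : ℝ :=
  ∑ i, ∑ j, C i j * A (σ i) (σ j)

lemma exists_quadStat_eq_quadForm [Nonempty (Fin N)] (hcol : ∀ j, ∑ i, C i j = 0)
    (hrow : ∀ i, ∑ j, C i j = 0) (hA : A.PosSemidef)
    (hb : ∀ i j, A i i + A j j - 2 * A i j ≤ b) :
    ∃ w : Fin N → EuclideanSpace ℝ (Fin N), IsCenteredFamily b w ∧
      ∀ σ, quadStat C A σ = quadForm (symmPart C) (w ∘ σ) := by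
  obtain ⟨v, hv⟩ := exists_inner_eq hA
  have hdist (i j : Fin N) : ‖v i - v j‖ ^ 2 ≤ b := by
    rw [norm_sub_sq_real, ← real_inner_self_eq_norm_sq, ← real_inner_self_eq_norm_sq]
    simp only [hv]
    linarith [hb i j]
  obtain ⟨x, hx⟩ := exists_isCenteredFamily_sub hdist
  refine ⟨_, hx, fun σ => ?_⟩
  calc quadStat C A σ = quadForm C (v ∘ σ) := by
        simp only [quadStat, quadForm_eq_sum, comp_apply, hv]
    _ = quadForm (symmPart C) (v ∘ σ) := (quadForm_symmPart C _).symm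
    _ = quadForm (symmPart C) (fun i => v (σ i) - x) :=
      (quadForm_sub_const (isSymmCentered_symmPart hcol hrow) _ x).symm

lemma quadStat_eq_zero [Subsingleton (Fin N)] (hrow : ∀ i, ∑ j, C i j = 0)
    (σ : Equiv.Perm (Fin N)) : quadStat C A σ = 0 := by
  have hC (i j : Fin N) : C i j = 0 := by rw [← hrow i, Fintype.sum_subsingleton _ j]
  simp only [quadStat, hC, zero_mul, sum_const_zero]

lemma expect_exp_quadStat_sub_le (hcol : ∀ j, ∑ i, C i j = 0) (hrow : ∀ i, ∑ j, C i j = 0)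
    (hA : A.PosSemidef) (hb : ∀ i j, A i i + A j j - 2 * A i j ≤ b) {θ : ℝ} (hθ : 0 ≤ θ)
    (hθC : 1000 * b * opNorm C * θ ≤ 1) :
    𝔼 σ, exp (θ * (quadStat C A σ - permExp N (quadStat C A)))
      ≤ exp (2500 * b ^ 2 * frobNorm C ^ 2 * θ ^ 2) := by
  rw [permExp_eq_expect]
  rcases subsingleton_or_nontrivial (Fin N) with _ | _
  · simp only [quadStat_eq_zero hrow, expect_const_zero, sub_zero, mul_zero, exp_zero,
      Fintype.expect_const]
    exact one_le_exp (by positivity)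
  obtain ⟨w, hw, hquad⟩ := exists_quadStat_eq_quadForm hcol hrow hA hb
  set S := symmPart C
  have hS : IsSymmCentered S := isSymmCentered_symmPart hcol hrow
  have hmean : 𝔼 σ, quadStat C A σ = permMean S w := by
    have hzero := expect_deviation hS hw
    simp only [deviation, expect_sub_distrib, Fintype.expect_const] at hzero
    simpa only [hquad] using sub_eq_zero.1 hzero
  have hspec : (opNorm C ^ 2 • 1 - S * S).PosSemidef :=
    posSemidef_sq_smul_one_sub_sq hS.isSymm ((norm_symmPart_le C).trans_eq (opNorm_eq_norm C).symm)
  calc 𝔼 σ, exp (θ * (quadStat C A σ - 𝔼 σ', quadStat C A σ'))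
      = 𝔼 σ, exp (θ * deviation S w σ) := by
        rw [hmean]
        simp only [hquad, deviation]
    _ ≤ exp (2500 * b ^ 2 * (S * S).trace * θ ^ 2) :=
      expect_exp_deviation_le hS hw (norm_nonneg _) hspec hθ hθC
    _ ≤ exp (2500 * b ^ 2 * frobNorm C ^ 2 * θ ^ 2) := by
      gcongr
      exact (trace_symmPart_sq_le C).trans_eq (sq_sqrt (by positivity)).symm

end QuadraticStatistic

end HansonWright

-- `A i i + A j j - 2 * A i j` is the squared distance between the `i`-th and `j`-th Gram vectors.
open HansonWright in
theorem combinatorial_hanson_wright_psd_general :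
    ∃ K : ℝ, 0 < K ∧
      ∀ (N : ℕ) (C A : Matrix (Fin N) (Fin N) ℝ),
        (∀ k, ∑ i, C i k = 0) →
        (∀ k, ∑ j, C k j = 0) →
        A.PosSemidef →
        (∀ i j, A i i + A j j - 2 * A i j ≤ 4) →
        ∀ t : ℝ, 0 ≤ t →
          permProb N (fun σ =>
              (∑ i, ∑ j, C i j * A (σ i) (σ j))
                - permExp N (fun σ' => ∑ i, ∑ j, C i j * A (σ' i) (σ' j)) ≥ t)
            ≤ Real.exp (-(K * t ^ 2 /
                ((frobNorm C) ^ 2 + opNorm C * t))) := by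
  refine ⟨1 / 160000, by norm_num, fun N C A hcol hrow hA hdist t ht => ?_⟩
  have hC : 0 ≤ opNorm C := norm_nonneg _
  have htail := permProb_ge_le_of_expect_exp_le (v := 40000 * frobNorm C ^ 2)
    (ℓ := 80000 * opNorm C) (by positivity) (by positivity) ht fun θ hθ hθC =>
      (expect_exp_quadStat_sub_le hcol hrow hA hdist hθ
        (by linarith [mul_nonneg hC hθ])).trans_eq (by ring_nf)
  refine htail.trans_eq ?_
  rw [show 4 * (40000 * frobNorm C ^ 2) + 2 * (80000 * opNorm C) * t
    = 160000 * (frobNorm C ^ 2 + opNorm C * t) by ring, ← div_div, one_div_mul_eq_div]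

/-- A combinatorial Hanson–Wright-type inequality, `A` positive semidefinite. -/
theorem combinatorial_hanson_wright_psd :
    ∃ K : ℝ, 0 < K ∧
      ∀ (N : ℕ), 20 ≤ N →
      ∀ (C A : Matrix (Fin N) (Fin N) ℝ),
        (∀ k, ∑ i, C i k = 0) →
        (∀ k, ∑ j, C k j = 0) →
        A.PosSemidef →
        (∀ i j, A i j ∈ Set.Icc (-1 : ℝ) 1) →
        ∀ t : ℝ, 0 < t →
          permProb N (fun σ =>
              (∑ i, ∑ j, C i j * A (σ i) (σ j))
                - permExp N (fun σ' => ∑ i, ∑ j, C i j * A (σ' i) (σ' j)) ≥ t)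
            ≤ Real.exp (-(K * t ^ 2 /
                ((frobNorm C) ^ 2 + opNorm C * t))) := by
  obtain ⟨K, hK, h⟩ := combinatorial_hanson_wright_psd_general
  exact ⟨K, hK, fun N _ C A hcol hrow hA hent t ht => h N C A hcol hrow hA
    (fun i j => by linarith [(hent i i).2, (hent j j).2, (hent i j).1]) t ht.le⟩
end
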